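/- Let R be a commutative noetherian ring with identity, let a be an ideal of R, and let M be an a-torsion R-module (every element of M is annihilated by some power of a) whose support dimension satisfies dim_R M ≤ 2. Then M is a-cofinite if and only if the R-modules Hom_R(R/a, M), Ext^1_R(R/a, M) and Ext^2_R(R/a, M) are all finitely generated. -/

import Mathlib

universe u

open CategoryTheory

/-- `Ext^i_R(R/a, M)` as an `R`-module, for `M : ModuleCat R`. -/
noncomputable def extQuot {R : Type u} [CommRing R] (a : Ideal R) (i : ℕ)
    (M : ModuleCat.{u} R) : ModuleCat.{u} R :=
  ((Ext R (ModuleCat.{u} R) i).obj (Opposite.op (ModuleCat.of R (R ⧸ a)))).obj M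

/-- An `R`-module `M` is `a`-cofinite if `Supp M ⊆ V(a)` and `Ext^i_R(R/a, M)` is a
finitely generated `R`-module for every `i ≥ 0`. -/
def IsCofinite {R : Type u} [CommRing R] (a : Ideal R) (M : ModuleCat.{u} R) : Prop :=
  Module.support R M ⊆ PrimeSpectrum.zeroLocus (a : Set R) ∧
    ∀ i : ℕ, Module.Finite R (extQuot a i M)

/-!
For any list `l` of generators of `a`, the Koszul cohomology `H^i(l; M)` is finitely generated in
all degrees `i ≤ d` if and only if `Ext^i(R/a, M)` is. So the generators may be chosen at will,
and it is enough to find some for which finiteness in degrees `i ≤ d`, where `dim M ≤ d`,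
propagates to all `i`.

Work modulo the modules in dimension `< e`: those that are finitely generated up to a quotient
with support of dimension `< e`. Consider the modules `N` in dimension `≤ e`, supported in `V(a)`,
such that `N[a]` is in dimension `< e`. After dividing out a finitely generated submodule, only
finitely many primes `p` of dimension `e` remain in the support; there `N_p` is artinian by
Melkersson's criterion, and a secondary decomposition shows that `N / xN` is in dimension `< e`
for a generic `x ∈ a`. It follows that these `N` form a Serre class. If each element of `l` is
chosen generic for the Koszul cohomology of those before it, then `H^k(l; M)` is in dimension
`≤ d - k`, hence in the class for `e = d - k` when `k ≤ d`. The long exact sequences carry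
membership in the class for `e = 0` from degree `d` to all higher degrees `i`. There `H^i[a]` is
finitely generated, and so is `H^i`, because a power of `a` annihilates it.
-/

universe w

section Exact

variable {R : Type*} [CommRing R]
  {A B C : Type*} [AddCommGroup A] [AddCommGroup B] [AddCommGroup C]
  [Module R A] [Module R B] [Module R C] {f : A →ₗ[R] B} {g : B →ₗ[R] C}

lemma support_subset_of_exact (h : Function.Exact f g) :
    Module.support R B ⊆ Module.support R A ∪ Module.support R C := by
  rw [Module.support_of_exact (f := f.range.subtype) (g := g.rangeRestrict)
    (LinearMap.exact_iff.2 (by simp [h.linearMap_ker_eq])) f.range.subtype_injective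
    g.surjective_rangeRestrict]
  exact Set.union_subset_union (Module.support_subset_of_surjective _ f.surjective_rangeRestrict)
    (Module.support_subset_of_injective _ g.range.subtype_injective)

lemma module_finite_of_exact [IsNoetherianRing R] [Module.Finite R A] [Module.Finite R C]
    (h : Function.Exact f g) : Module.Finite R B :=
  have := isNoetherian_of_range_eq_ker f g h.linearMap_ker_eq.symm
  inferInstance

end Exact

section Support

lemma support_subset_zeroLocus_of_le_radical_annihilator {R N : Type*} [CommRing R]
    [AddCommGroup N] [Module R N] {a : Ideal R} (h : a ≤ (Module.annihilator R N).radical) :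
    Module.support R N ⊆ PrimeSpectrum.zeroLocus a := fun p hp =>
  (h.trans (Ideal.radical_mono (Module.annihilator_le_of_mem_support hp))).trans
    p.isPrime.radical.le

lemma support_subset_zeroLocus_of_forall_exists_pow {R M : Type*} [CommRing R] [AddCommGroup M]
    [Module R M] {a : Ideal R} (htor : ∀ m : M, ∃ n : ℕ, ∀ r ∈ a ^ n, r • m = 0) :
    Module.support R M ⊆ PrimeSpectrum.zeroLocus a := fun p hp => by
  obtain ⟨m, hm⟩ := Module.mem_support_iff_exists_annihilator.1 hp
  obtain ⟨n, hn⟩ := htor m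
  exact p.isPrime.le_of_pow_le (n := n) fun r hr =>
    hm (Submodule.mem_annihilator_span_singleton m r |>.2 (hn r hr))

end Support

section Melkersson

open scoped Pointwise

lemma exists_forall_ge_eq_of_antitone₂ {α : Type*} [PartialOrder α] [WellFoundedLT α]
    {K : ℕ → ℕ → α} (hK : Antitone K) (hK' : ∀ n, Antitone (K n)) :
    ∃ i, ∀ n, ∀ j ≥ i, K n j = K n i := by
  obtain ⟨d, hd⟩ := WellFoundedLT.antitone_chain_condition (f := fun n => K n n)
    fun n m h => (hK h m).trans (hK' n h)
  choose k hk using fun n => WellFoundedLT.antitone_chain_condition (hK' n)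
  have hsup (n : ℕ) (hn : n < d) : k n ≤ (Finset.range d).sup k :=
    Finset.le_sup (Finset.mem_range.2 hn)
  refine ⟨max d ((Finset.range d).sup k), fun n j hj => (hK' n hj).antisymm ?_⟩
  obtain hn | hn := lt_or_ge n d
  · exact ((hk n _ (le_max_of_le_right (hsup n hn))).symm.trans
      (hk n j ((le_max_of_le_right (hsup n hn)).trans hj))).le
  · calc K n (max d _) ≤ K d d := (hK hn _).trans (hK' d (le_max_left _ _))
      _ = K (max n j) (max n j) := hd _ (hn.trans (le_max_left n j))
      _ ≤ K n j := (hK (le_max_left n j) _).trans (hK' n (le_max_right n j))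

variable {R C : Type*} [CommRing R] [AddCommGroup C] [Module R C]

open Submodule in
lemma isArtinian_of_isArtinian_torsionBy {y : R} (hy : ∀ c : C, ∃ n : ℕ, y ^ n • c = 0)
    [IsArtinian R (torsionBy R C y)] : IsArtinian R C := by
  rw [← monotone_stabilizes_iff_artinian]
  intro N
  have hN : Antitone fun i => (N i).ofDual := N.monotone
  let K (n i : ℕ) : Submodule R (torsionBy R C y) :=
    (y ^ n • (N i).ofDual).comap (torsionBy R C y).subtype
  have hK : Antitone K := antitone_nat_of_succ_le fun n i => comap_mono <| by
    rw [pow_succ', mul_smul]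
    exact smul_le_self_of_tower y _
  obtain ⟨i, hi⟩ := exists_forall_ge_eq_of_antitone₂ hK
    fun n j k hjk => comap_mono (smul_mono_right (y ^ n) (hN hjk))
  refine ⟨i, fun j hij => le_antisymm (N.monotone hij) fun c hc => ?_⟩
  have mem_of_pow_smul_eq_zero (n : ℕ) :
      ∀ c ∈ (N i).ofDual, y ^ n • c = 0 → c ∈ (N j).ofDual := by
    induction n with
    | zero => exact fun c _ h0 => by simp_all
    | succ n ih =>
      intro c hc h0
      have hmem : (⟨y ^ n • c, by rwa [mem_torsionBy_iff, smul_smul, ← pow_succ']⟩ :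
          torsionBy R C y) ∈ K n j := hi n j hij ▸ smul_mem_pointwise_smul c _ _ hc
      obtain ⟨c', hc', h⟩ := hmem
      have := ih (c - c') (sub_mem hc (hN hij hc')) (by simpa [smul_sub, sub_eq_zero] using h.symm)
      simpa using add_mem this hc'
  obtain ⟨n, hn⟩ := hy c
  exact mem_of_pow_smul_eq_zero n c hc hn

open Submodule in
theorem isArtinian_of_isArtinian_torsionBySet {I : Ideal R} (hI : I.FG)
    (htor : ∀ x ∈ I, ∀ c : C, ∃ n : ℕ, x ^ n • c = 0)
    [h : IsArtinian R (torsionBySet R C I)] : IsArtinian R C := by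
  induction I, hI using Submodule.fg_induction generalizing C with
  | singleton x =>
    rw [torsionBySet_span_singleton_eq] at h
    exact isArtinian_of_isArtinian_torsionBy (htor x (mem_span_singleton_self x))
  | sup I J _ _ ihI ihJ =>
    have hIJ : IsArtinian R (torsionBySet R (torsionBySet R C I) J) :=
      let i : torsionBySet R (torsionBySet R C I) J →ₗ[R] torsionBySet R C (I ⊔ J : Ideal R) :=
        ((torsionBySet R C I).subtype ∘ₗ Submodule.subtype _).codRestrict _ fun c =>
          (mem_torsionBySet_iff _ _).2 fun ⟨r, hr⟩ => by
            obtain ⟨s, hs, t, ht, rfl⟩ := mem_sup.1 hr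
            have h1 := (mem_torsionBySet_iff _ _).1 c.1.2 ⟨s, hs⟩
            have h2 := congr(Subtype.val $((mem_torsionBySet_iff _ _).1 c.2 ⟨t, ht⟩))
            simp_all [add_smul]
      isArtinian_of_injective i fun c c' h => Subtype.ext (Subtype.ext congr(($h).1))
    have := ihJ (C := torsionBySet R C I) fun x hx c =>
      (htor x (mem_sup_right hx) c).imp fun n hn => Subtype.ext hn
    exact ihI fun x hx => htor x (mem_sup_left hx)

end Melkersson

section InDimensionLT

open Module Submodule
open scoped Pointwise

lemma exists_fg_map_eq_of_le_range {R A B : Type*} [Ring R] [AddCommGroup A] [AddCommGroup B]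
    [Module R A] [Module R B] {f : A →ₗ[R] B} {L : Submodule R B} (hL : L.FG)
    (hLf : L ≤ LinearMap.range f) : ∃ K : Submodule R A, K.FG ∧ K.map f = L := by
  obtain ⟨s, hs, rfl⟩ := fg_def.1 hL
  choose! r hr using fun b (hb : b ∈ s) => hLf (subset_span hb)
  refine ⟨span R (r '' s), fg_span (hs.image r), ?_⟩
  rw [map_span, Set.image_image, Set.image_congr hr, Set.image_id']

lemma coheight_le_krullDim_of_isUpperSet {α : Type*} [Preorder α] {s : Set α} (hs : IsUpperSet s)
    {x : α} (hx : x ∈ s) : (Order.coheight x : WithBot ℕ∞) ≤ Order.krullDim s := by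
  have hcoh : Order.coheight x ≤ Order.coheight (⟨x, hx⟩ : s) := Order.coheight_le fun l hl =>
    let l' : LTSeries s := ⟨l.length, fun i => ⟨l i, hs (LTSeries.head_le l i) (hl ▸ hx)⟩, l.step⟩
    Order.length_le_coheight (p := l') (Subtype.mk_le_mk.2 hl.ge)
  exact (WithBot.coe_le_coe.2 hcoh).trans (Order.coheight_le_krullDim _)

/-- A module is in dimension `< e` if it has a finitely generated submodule whose quotient is
supported at primes of dimension `< e` (Asadollahi–Naghipour). -/
def InDimensionLT (R : Type*) [CommRing R] (e : ℕ) (N : Type*) [AddCommGroup N] [Module R N] :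
    Prop :=
  ∃ L : Submodule R N, L.FG ∧ ∀ p ∈ support R (N ⧸ L), Order.coheight p < e

variable {R : Type*} [CommRing R] {e : ℕ} {A B C : Type*} [AddCommGroup A] [AddCommGroup B]
  [AddCommGroup C] [Module R A] [Module R B] [Module R C] {f : A →ₗ[R] B} {g : B →ₗ[R] C}

lemma inDimensionLT_of_finite [Module.Finite R A] : InDimensionLT R e A :=
  ⟨⊤, Module.Finite.fg_top, by simp [support_eq_empty]⟩

lemma inDimensionLT_zero_iff : InDimensionLT R 0 A ↔ Module.Finite R A := by
  refine ⟨fun ⟨L, hL, h⟩ => ?_, fun h => inDimensionLT_of_finite⟩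
  have hsub : Subsingleton (A ⧸ L) :=
    support_eq_empty_iff.1 (Set.eq_empty_of_forall_notMem (by simpa using h))
  exact ⟨Submodule.Quotient.subsingleton_iff.1 hsub ▸ hL⟩

lemma inDimensionLT_succ_of_krullDim_support_le {d : ℕ}
    (h : Order.krullDim (support R A) ≤ d) : InDimensionLT R (d + 1) A := by
  refine ⟨⊥, fg_bot, fun p hp => ?_⟩
  rw [(quotEquivOfEqBot ⊥ rfl).support_eq] at hp
  have hle := (coheight_le_krullDim_of_isUpperSet (fun _ _ => mem_support_mono) hp).trans h
  exact ENat.lt_natCast_add_one_iff.2 (WithBot.coe_le_coe.1 hle)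

lemma InDimensionLT.of_exact [IsNoetherianRing R] (hA : InDimensionLT R e A)
    (hC : InDimensionLT R e C) (h : Function.Exact f g) : InDimensionLT R e B := by
  obtain ⟨K, hK, hKe⟩ := hA
  obtain ⟨N, hN, hNe⟩ := hC
  have := isNoetherian_of_fg_of_noetherian N hN
  obtain ⟨L, hL, hLN⟩ := exists_fg_map_eq_of_le_range
    (FG.of_le_of_isNoetherian (inf_le_left : N ⊓ LinearMap.range g ≤ N)) inf_le_right
  have hgL : K.map f ⊔ L ≤ N.comap g := sup_le
    (map_le_iff_le_comap.2 fun k _ => by simp [h.apply_apply_eq_zero])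
    (map_le_iff_le_comap.1 (hLN.trans_le inf_le_left))
  have hexact : Function.Exact (K.mapQ (K.map f ⊔ L) f (map_le_iff_le_comap.1 le_sup_left))
      ((K.map f ⊔ L).mapQ N g hgL) := by
    intro b
    obtain ⟨b, rfl⟩ := mkQ_surjective _ b
    refine ⟨fun hb => ?_, ?_⟩
    · obtain ⟨l, hl, hlb⟩ := hLN.ge ⟨(Quotient.mk_eq_zero N).1 hb, b, rfl⟩
      obtain ⟨c, hc⟩ := (h (b - l)).1 (by rw [map_sub, hlb, sub_self])
      refine ⟨K.mkQ c, (Submodule.Quotient.eq _).2 ?_⟩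
      rw [hc, sub_sub_cancel_left]
      exact neg_mem (mem_sup_right hl)
    · rintro ⟨c, hc⟩
      obtain ⟨c, rfl⟩ := mkQ_surjective _ c
      simp [← hc, h.apply_apply_eq_zero]
  exact ⟨K.map f ⊔ L, (hK.map f).sup hL, fun p hp =>
    (support_subset_of_exact hexact hp).elim (hKe p) (hNe p)⟩

lemma InDimensionLT.of_surjective [IsNoetherianRing R] (hA : InDimensionLT R e A)
    (hf : Function.Surjective f) : InDimensionLT R e B :=
  hA.of_exact (inDimensionLT_of_finite (A := PUnit.{1})) (g := 0) fun b => by simpa using hf b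

lemma InDimensionLT.of_injective [IsNoetherianRing R] (hC : InDimensionLT R e C)
    (hg : Function.Injective g) : InDimensionLT R e B :=
  (inDimensionLT_of_finite (A := PUnit.{1})).of_exact hC (f := 0) (g := g) fun b => by
    simp [map_eq_zero_iff g hg, eq_comm]

lemma inDimensionLT_of_smul_top_le [IsNoetherianRing R] {a : Ideal R} {P : Submodule R A}
    (hP : P.FG) (haP : a • ⊤ ≤ P) (hA : InDimensionLT R e (torsionBySet R A a)) :
    InDimensionLT R e A := by
  have := isNoetherian_of_fg_of_noetherian P hP
  -- The kernel of the multiplication map `A → Hom(a, P)` is `A[a]`.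
  let mulHom : A →ₗ[R] a →ₗ[R] P := LinearMap.mk₂' R R
    (fun x r => ⟨r.1 • x, haP (smul_mem_smul r.2 mem_top)⟩)
    (fun _ _ _ => Subtype.ext (smul_add _ _ _)) (fun _ _ _ => Subtype.ext (smul_comm _ _ _))
    (fun _ _ _ => Subtype.ext (add_smul _ _ _)) (fun _ _ _ => Subtype.ext (mul_smul _ _ _))
  refine hA.of_exact (inDimensionLT_of_finite (A := a →ₗ[R] P)) (f := (torsionBySet R A a).subtype)
    (g := mulHom) fun x => ?_
  simp [mulHom, LinearMap.ext_iff, Subtype.ext_iff]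

/-- The map `A[a] → B[a]` induced by `f : A → B`. -/
def torsionBySetMap (f : A →ₗ[R] B) (a : Ideal R) : torsionBySet R A a →ₗ[R] torsionBySet R B a :=
  f.restrict fun x hx => by simp_all [← map_smul]

lemma torsionBySetMap_injective (hf : Function.Injective f) (a : Ideal R) :
    Function.Injective (torsionBySetMap f a) :=
  fun _ _ h => Subtype.ext (hf congr(($h).1))

lemma torsionBySetMap_exact (hf : Function.Injective f) (h : Function.Exact f g) (a : Ideal R) :
    Function.Exact (torsionBySetMap f a) (torsionBySetMap g a) := fun b => by
  refine ⟨fun hb => ?_, ?_⟩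
  · obtain ⟨x, hx⟩ := (h b).1 congr(($hb).1)
    refine ⟨⟨x, (mem_torsionBySet_iff _ _).2 fun r => hf ?_⟩, Subtype.ext hx⟩
    rw [map_smul, hx, map_zero]
    exact (mem_torsionBySet_iff _ _).1 b.2 r
  · rintro ⟨x, rfl⟩
    exact Subtype.ext ((h _).2 ⟨x, rfl⟩)

lemma finite_of_finite_torsionBySet [IsNoetherianRing R] {a : Ideal R}
    (ha : a ≤ (annihilator R A).radical) [h : Module.Finite R (torsionBySet R A a)] :
    Module.Finite R A := by
  obtain ⟨n, hn⟩ := Ideal.exists_pow_le_of_le_radical_of_fg ha (IsNoetherian.noetherian a)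
  clear ha
  induction n generalizing A with
  | zero =>
    have := annihilator_eq_top_iff.1 (top_le_iff.1 (by simpa using hn))
    infer_instance
  | succ n ih =>
    have hP : a ^ n ≤ annihilator R (a • ⊤ : Submodule R A) := by
      rwa [Submodule.le_annihilator_iff, ← Submodule.mul_smul, ← pow_succ,
        ← Submodule.le_annihilator_iff, annihilator_top]
    have := Module.Finite.of_injective _
      (torsionBySetMap_injective (a • ⊤ : Submodule R A).subtype_injective a)
    have := ih hP
    rw [← inDimensionLT_zero_iff] at h ⊢
    exact inDimensionLT_of_smul_top_le (FG.of_finite (N := a • ⊤)) le_rfl h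

lemma InDimensionLT.torsionBySet_quotient [IsNoetherianRing R] {a : Ideal R} {L : Submodule R A}
    (hL : L.FG) (hA : InDimensionLT R e (torsionBySet R A a)) :
    InDimensionLT R e (torsionBySet R (A ⧸ L) a) := by
  let E : Submodule R A := (torsionBySet R (A ⧸ L) a).comap L.mkQ
  have hLE : L ≤ E := fun x hx => by
    simp [E, (Submodule.Quotient.mk_eq_zero L).2 hx]
  have haE : a • ⊤ ≤ L.comap E.subtype := smul_le.2 fun r hr x _ =>
    (Submodule.Quotient.mk_eq_zero L).1 ((mem_torsionBySet_iff _ _).1 x.2 ⟨r, hr⟩)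
  have hLfg : (L.comap E.subtype).FG := by
    have := Module.Finite.iff_fg.2 hL
    exact Module.Finite.iff_fg.1 (.equiv (comapSubtypeEquivOfLe hLE).symm)
  have hE : InDimensionLT R e E := inDimensionLT_of_smul_top_le hLfg haE
    (hA.of_injective (torsionBySetMap_injective E.subtype_injective a))
  refine hE.of_surjective (f := L.mkQ.restrict fun _ h => h) fun ⟨x, hx⟩ => ?_
  obtain ⟨x, rfl⟩ := L.mkQ_surjective x
  exact ⟨⟨x, hx⟩, rfl⟩

end InDimensionLT

section Secondary

open Submodule
open scoped Pointwise

variable {R C : Type*} [CommRing R] [AddCommGroup C] [Module R C] {S : Submodule R C}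

/-- A submodule `S` is secondary if multiplication by any ring element is surjective or nilpotent
on `S`. -/
def IsSecondary (S : Submodule R C) : Prop :=
  ∀ x : R, S ≤ x • S ∨ x ∈ S.annihilator.radical

lemma IsSecondary.isPrime_radical_annihilator (hS : IsSecondary S) (hS' : S ≠ ⊥) :
    S.annihilator.radical.IsPrime := by
  have le_pow_smul {x : R} (hx : x ∉ S.annihilator.radical) (n : ℕ) : S ≤ x ^ n • S := by
    induction n with
    | zero => simp
    | succ n ih =>
      rw [pow_succ, mul_smul]
      exact ih.trans (smul_mono_right _ ((hS x).resolve_right hx))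
  refine ⟨by simpa [Ideal.radical_eq_top, annihilator_eq_top_iff], fun {x y} ⟨n, hn⟩ => ?_⟩
  refine or_iff_not_imp_left.2 fun hx => ⟨n, mem_annihilator.2 fun s hs => ?_⟩
  obtain ⟨t, ht, rfl⟩ := le_pow_smul hx n hs
  simpa [smul_smul, ← mul_pow, mul_comm] using mem_annihilator.1 hn t ht

lemma isSecondary_of_supIrred [IsArtinian R C] (hS : SupIrred S) : IsSecondary S := by
  intro x
  obtain ⟨n, hn⟩ := WellFoundedLT.antitone_chain_condition (f := fun n : ℕ => x ^ n • S) <|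
    antitone_nat_of_succ_le fun n => by
      rw [pow_succ', mul_smul]
      exact smul_le_self_of_tower x _
  have hsup : x ^ (n + 1) • S ⊔ S ⊓ torsionBy R C (x ^ (n + 1)) = S := by
    refine le_antisymm (sup_le (smul_le_self_of_tower _ S) inf_le_left) fun s hs => ?_
    have hmem : x ^ (n + 1) • s ∈ x ^ (n + 1 + (n + 1)) • S := by
      rw [← hn (n + 1 + (n + 1)) (by lia), hn (n + 1) (by lia)]
      exact smul_mem_pointwise_smul s _ S hs
    obtain ⟨t, ht, hts⟩ := hmem
    rw [← add_sub_cancel (x ^ (n + 1) • t) s]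
    refine add_mem_sup (smul_mem_pointwise_smul t _ S ht)
      ⟨sub_mem hs (S.smul_mem _ ht), (mem_torsionBy_iff _ _).2 ?_⟩
    rw [smul_sub, smul_smul, ← pow_add, sub_eq_zero]
    exact hts.symm
  refine (hS.2 hsup).imp (fun h => ?_) fun h => ⟨n + 1, mem_annihilator.2 fun s hs => ?_⟩
  · rw [pow_succ', mul_smul] at h
    exact h.ge.trans (smul_mono_right x (smul_le_self_of_tower _ S))
  · exact (mem_torsionBy_iff _ _).1 (h.ge hs).2

lemma exists_finset_isSecondary_sup_eq_top [IsArtinian R C] :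
    ∃ s : Finset (Submodule R C), (∀ S ∈ s, IsSecondary S ∧ S ≠ ⊥) ∧ s.sup id = ⊤ := by
  obtain ⟨s, hs, hirr⟩ := exists_supIrred_decomposition (⊤ : Submodule R C)
  exact ⟨s, fun S hS => ⟨isSecondary_of_supIrred (hirr hS), (hirr hS).ne_bot⟩, hs⟩

lemma finite_quotSMulTop_of_isArtinian [IsNoetherianRing R] [IsArtinian R C] (a : Ideal R)
    [Module.Finite R (torsionBySet R C a)] :
    ∃ W : Set (PrimeSpectrum R), W.Finite ∧ (∀ p ∈ W, ¬ a ≤ p.asIdeal) ∧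
      ∀ x, (∀ p ∈ W, x ∉ p.asIdeal) → Module.Finite R (QuotSMulTop x C) := by
  obtain ⟨s, hs, hsup⟩ := exists_finset_isSecondary_sup_eq_top (R := R) (C := C)
  refine ⟨{p | ¬ a ≤ p.asIdeal ∧ ∃ S ∈ s, S.annihilator.radical = p.asIdeal},
    ?_, fun p hp => hp.1, fun x hx => ?_⟩
  · exact ((s.finite_toSet.image fun S : Submodule R C => S.annihilator.radical).preimage
      fun _ _ _ _ => PrimeSpectrum.ext).subset fun p hp => hp.2
  have hfg (S) (hS : S ∈ s) : (S.map (mkQ (x • ⊤ : Submodule R C))).FG := by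
    by_cases ha : a ≤ S.annihilator.radical
    · have := Module.Finite.of_injective _
        (torsionBySetMap_injective S.subtype_injective a)
      exact FG.map _ (Module.Finite.iff_fg.1 (finite_of_finite_torsionBySet ha))
    · have hp := (hs S hS).1.isPrime_radical_annihilator (hs S hS).2
      have hxS := ((hs S hS).1 x).resolve_right (hx ⟨_, hp⟩ ⟨ha, S, hS, rfl⟩)
      rw [LinearMap.le_ker_iff_map.1 (by simpa using hxS.trans (smul_mono_right x le_top))]
      exact fg_bot
  have htop : ((s.sup id).map (mkQ (x • ⊤ : Submodule R C))).FG := by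
    simpa only [Finset.sup_eq_iSup, Submodule.map_iSup, id_eq] using fg_biSup s _ hfg
  rw [hsup, Submodule.map_top, range_mkQ] at htop
  exact ⟨htop⟩

end Secondary

section LocalizedModule

open Module Submodule
open scoped Pointwise

variable {R C : Type*} [CommRing R] [AddCommGroup C] [Module R C]

lemma notMem_support_quotient_iff {p : PrimeSpectrum R} {L : Submodule R C} :
    p ∉ support R (C ⧸ L) ↔ L.localized p.asIdeal.primeCompl = ⊤ := by
  rw [notMem_support_iff, ← (localizedQuotientEquiv _ L).toEquiv.subsingleton_congr,
    Submodule.Quotient.subsingleton_iff]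

lemma exists_fg_notMem_support_quotient (p : PrimeSpectrum R)
    [h : Module.Finite (Localization.AtPrime p.asIdeal)
      (LocalizedModule p.asIdeal.primeCompl C)] :
    ∃ L : Submodule R C, L.FG ∧ p ∉ support R (C ⧸ L) := by
  obtain ⟨t, ht⟩ := h.fg_top
  choose y hy using
    IsLocalizedModule.mk'_surjective p.asIdeal.primeCompl
      (LocalizedModule.mkLinearMap p.asIdeal.primeCompl C)
  refine ⟨span R ((fun z => (y z).1) '' t), fg_span (t.finite_toSet.image _), ?_⟩
  rw [notMem_support_quotient_iff, eq_top_iff, ← ht, span_le]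
  exact fun z hz => ⟨(y z).1, subset_span ⟨z, hz, rfl⟩, (y z).2, hy z⟩

lemma mem_localized_torsionBySet {p : PrimeSpectrum R} {a : Ideal R} (ha : a.FG)
    {z : LocalizedModule p.asIdeal.primeCompl C}
    (hz : z ∈ torsionBySet (Localization.AtPrime p.asIdeal) _
      (a.map (algebraMap R (Localization.AtPrime p.asIdeal)) : Set _)) :
    z ∈ (torsionBySet R C a).localized p.asIdeal.primeCompl := by
  obtain ⟨⟨c, s⟩, rfl⟩ := IsLocalizedModule.mk'_surjective p.asIdeal.primeCompl
    (LocalizedModule.mkLinearMap _ C) z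
  have hfin : Module.Finite R (a • (R ∙ c) : Submodule R C) :=
    Module.Finite.iff_fg.2 (FG.smul ha (fg_span_singleton c))
  have hp : p ∉ support R (a • (R ∙ c) : Submodule R C) := by
    rw [notMem_support_iff']
    rintro ⟨_, hm⟩
    obtain ⟨r, hr, rfl⟩ := mem_smul_span_singleton.1 hm
    have hrz := (mem_torsionBySet_iff _ _).1 hz
      ⟨algebraMap R _ r, Ideal.mem_map_of_mem _ hr⟩
    rw [Function.uncurry_apply_pair, algebraMap_smul, ← IsLocalizedModule.mk'_smul,
      IsLocalizedModule.mk'_eq_zero'] at hrz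
    obtain ⟨u, hu⟩ := hrz
    exact ⟨u, u.2, Subtype.ext hu⟩
  rw [mem_support_iff_of_finite, SetLike.not_le_iff_exists] at hp
  obtain ⟨u, hu, hup⟩ := hp
  refine ⟨u • c, ?_, ⟨u, hup⟩ * s, IsLocalizedModule.mk'_cancel_left _ c ⟨u, hup⟩ s⟩
  refine (mem_torsionBySet_iff _ _).2 fun r => ?_
  rw [smul_comm]
  exact Submodule.mem_annihilator.1 hu _ (smul_mem_smul r.2 (mem_span_singleton_self c))

lemma maximalIdeal_le_radical_torsionOf {p : PrimeSpectrum R} (hp : ∀ q ∈ support R C, ¬ q < p)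
    (z : LocalizedModule p.asIdeal.primeCompl C) :
    IsLocalRing.maximalIdeal (Localization.AtPrime p.asIdeal) ≤
      (Ideal.torsionOf (Localization.AtPrime p.asIdeal) _ z).radical := by
  obtain ⟨⟨c, s⟩, rfl⟩ := IsLocalizedModule.mk'_surjective p.asIdeal.primeCompl
    (LocalizedModule.mkLinearMap _ C) z
  rw [Ideal.radical_eq_sInf]
  refine le_sInf fun P ⟨hcP, hP⟩ => ?_
  have hq : (⟨P.comap (algebraMap R _), inferInstance⟩ : PrimeSpectrum R) ∈ support R C := by
    refine mem_support_iff_exists_annihilator.2 ⟨c, fun r hr => hcP ?_⟩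
    rw [Ideal.mem_torsionOf_iff, algebraMap_smul, Function.uncurry_apply_pair,
      ← IsLocalizedModule.mk'_smul, (mem_annihilator_span_singleton _ _).1 hr,
      IsLocalizedModule.mk'_zero]
  have hqp : P.comap (algebraMap R _) ≤ p.asIdeal :=
    (Ideal.comap_mono (IsLocalRing.le_maximalIdeal hP.ne_top)).trans_eq
      Localization.AtPrime.under_maximalIdeal
  have hpq : p.asIdeal ≤ P.comap (algebraMap R _) :=
    not_not.1 fun h => hp _ hq (lt_of_le_not_ge hqp h)
  rw [← Localization.AtPrime.map_eq_maximalIdeal]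
  exact Ideal.map_le_iff_le_comap.2 hpq

end LocalizedModule

section GenericLocal

open Module Submodule
open scoped Pointwise

lemma isArtinian_of_le_radical_torsionOf {A C : Type*} [CommRing A] [IsLocalRing A]
    [IsNoetherianRing A] [AddCommGroup C] [Module A C] {J : Ideal A}
    (hJ : J ≤ IsLocalRing.maximalIdeal A)
    (hC : ∀ z : C, IsLocalRing.maximalIdeal A ≤ (Ideal.torsionOf A C z).radical)
    [Module.Finite A (torsionBySet A C J)] : IsArtinian A C := by
  let m := IsLocalRing.maximalIdeal A
  have hle : torsionBySet A C m ≤ torsionBySet A C J := torsionBySet_le_torsionBySet_of_subset hJ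
  have hfin : Module.Finite A (torsionBySet A C m) :=
    Module.Finite.of_injective (inclusion hle) (inclusion_injective hle)
  let := (torsionBySet_isTorsionBySet (R := A) (M := C) m).module
  have : IsScalarTower A (A ⧸ m) (torsionBySet A C m) :=
    (torsionBySet_isTorsionBySet (R := A) (M := C) m).isScalarTower
  have : Module.Finite (A ⧸ m) (torsionBySet A C m) :=
    Module.Finite.of_restrictScalars_finite A _ _
  let := Ideal.Quotient.field m
  have : IsArtinian A (torsionBySet A C m) :=
    isArtinian_of_surjective_algebraMap (R := A ⧸ m) Ideal.Quotient.mk_surjective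
  exact isArtinian_of_isArtinian_torsionBySet (IsNoetherian.noetherian m) fun x hx z => hC z hx

variable {R C : Type*} [CommRing R] [AddCommGroup C] [Module R C]

lemma finite_torsionBySet_localizedModule [IsNoetherianRing R] {p : PrimeSpectrum R} {a : Ideal R}
    {L : Submodule R (torsionBySet R C a)} (hL : L.FG)
    (hp : p ∉ support R (torsionBySet R C a ⧸ L)) :
    Module.Finite (Localization.AtPrime p.asIdeal)
      (torsionBySet (Localization.AtPrime p.asIdeal) (LocalizedModule p.asIdeal.primeCompl C)
        (a.map (algebraMap R (Localization.AtPrime p.asIdeal)) : Set _)) := by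
  obtain ⟨t, rfl⟩ := hL
  rw [notMem_support_quotient_iff, Submodule.localized, localized'_span] at hp
  have : Module.Finite (Localization.AtPrime p.asIdeal)
      (LocalizedModule p.asIdeal.primeCompl (torsionBySet R C a)) :=
    ⟨hp ▸ fg_span (t.finite_toSet.image _)⟩
  have hle : torsionBySet (Localization.AtPrime p.asIdeal)
      (LocalizedModule p.asIdeal.primeCompl C)
        (a.map (algebraMap R (Localization.AtPrime p.asIdeal)) : Set _) ≤
      LinearMap.range (LocalizedModule.map p.asIdeal.primeCompl (torsionBySet R C a).subtype) := by
    intro z hz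
    obtain ⟨c, hc, s, rfl⟩ := mem_localized_torsionBySet (IsNoetherian.noetherian a) hz
    exact ⟨.mk ⟨c, hc⟩ s, by rw [LocalizedModule.map_mk, IsLocalizedModule.mk_eq_mk']; rfl⟩
  have := isNoetherian_of_isNoetherianRing_of_finite (Localization.AtPrime p.asIdeal)
    (LinearMap.range (LocalizedModule.map p.asIdeal.primeCompl (torsionBySet R C a).subtype))
  exact Module.Finite.of_injective (inclusion hle) (inclusion_injective hle)

lemma finite_localizedModule_quotSMulTop {S : Submonoid R} (x : R)
    [Module.Finite (Localization S)
      (QuotSMulTop (algebraMap R (Localization S) x) (LocalizedModule S C))] :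
    Module.Finite (Localization S) (LocalizedModule S (QuotSMulTop x C)) := by
  let φ := LocalizedModule.map S (mkQ (x • ⊤ : Submodule R C))
  have hφ : Function.Surjective φ := LocalizedModule.map_surjective _ _ (mkQ_surjective _)
  have hx : x • mkQ (x • ⊤ : Submodule R C) = 0 := by
    ext c
    exact (Submodule.Quotient.mk_eq_zero _).2 (smul_mem_pointwise_smul c x ⊤ trivial)
  have hle : (algebraMap R (Localization S) x • ⊤ : Submodule _ (LocalizedModule S C)) ≤
      LinearMap.ker φ := by
    rintro _ ⟨z, -, rfl⟩
    have : x • φ = 0 := by rw [← map_smul, hx, map_zero]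
    simpa using LinearMap.congr_fun this z
  refine Module.Finite.of_surjective (liftQ _ φ hle) ?_
  rw [← LinearMap.range_eq_top, range_liftQ, LinearMap.range_eq_top]
  exact hφ

lemma exists_forall_exists_fg_notMem_support_quotSMulTop [IsNoetherianRing R]
    {p : PrimeSpectrum R} {a : Ideal R} (hp : ∀ q ∈ support R C, ¬ q < p) (hap : a ≤ p.asIdeal)
    {L : Submodule R (torsionBySet R C a)} (hL : L.FG)
    (hpL : p ∉ support R (torsionBySet R C a ⧸ L)) :
    ∃ W : Set (PrimeSpectrum R), W.Finite ∧ (∀ q ∈ W, ¬ a ≤ q.asIdeal) ∧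
      ∀ x, (∀ q ∈ W, x ∉ q.asIdeal) →
        ∃ F : Submodule R (QuotSMulTop x C), F.FG ∧ p ∉ support R (QuotSMulTop x C ⧸ F) := by
  have := finite_torsionBySet_localizedModule hL hpL
  have hle : a.map (algebraMap R (Localization.AtPrime p.asIdeal)) ≤
      IsLocalRing.maximalIdeal (Localization.AtPrime p.asIdeal) := by
    rw [← Localization.AtPrime.map_eq_maximalIdeal]
    exact Ideal.map_mono hap
  have : IsArtinian (Localization.AtPrime p.asIdeal) (LocalizedModule p.asIdeal.primeCompl C) :=
    isArtinian_of_le_radical_torsionOf hle (maximalIdeal_le_radical_torsionOf hp)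
  obtain ⟨W, hW, haW, hfin⟩ := finite_quotSMulTop_of_isArtinian
    (C := LocalizedModule p.asIdeal.primeCompl C)
    (a.map (algebraMap R (Localization.AtPrime p.asIdeal)))
  refine ⟨PrimeSpectrum.comap (algebraMap R _) '' W, hW.image _, ?_, fun x hx => ?_⟩
  · rintro _ ⟨P, hP, rfl⟩ haP
    exact haW P hP (Ideal.map_le_iff_le_comap.2 haP)
  · have := hfin (algebraMap R _ x) fun P hP hxP => hx _ ⟨P, hP, rfl⟩ hxP
    have := finite_localizedModule_quotSMulTop (S := p.asIdeal.primeCompl) (C := C) x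
    exact exists_fg_notMem_support_quotient p

end GenericLocal

section GenericQuotient

open Module Submodule
open scoped Pointwise

variable {R C : Type*} [CommRing R] [AddCommGroup C] [Module R C]

lemma mem_support_iff_exists_colon_le {p : PrimeSpectrum R} :
    p ∈ support R C ↔ ∃ c : C, colon ⊥ {c} ≤ p.asIdeal := by
  simp [mem_support_iff_exists_annihilator, SetLike.le_def]

lemma isAssociatedPrime_torsionBySet_of_forall_not_lt [IsNoetherianRing R] {p : PrimeSpectrum R}
    {a : Ideal R} (hpC : p ∈ support R C) (hp : ∀ q ∈ support R C, ¬ q < p)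
    (hap : a ≤ p.asIdeal) : IsAssociatedPrime p.asIdeal (torsionBySet R C a) := by
  obtain ⟨c, hc⟩ := mem_support_iff_exists_colon_le.1 hpC
  have hmin : p.asIdeal ∈ (colon (⊥ : Submodule R C) {c}).minimalPrimes :=
    ⟨⟨p.isPrime, hc⟩, fun q ⟨hq, hcq⟩ hqp => not_not.1 fun h =>
      hp ⟨q, hq⟩ (mem_support_iff_exists_colon_le.2 ⟨c, hcq⟩) (lt_of_le_not_ge hqp h)⟩
  obtain ⟨x, hx⟩ := exists_eq_colon_of_mem_minimalPrimes hmin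
  have hxa : x ∈ torsionBySet R C a := (mem_torsionBySet_iff _ _).2 fun r => by
    have := hap r.2
    rwa [hx, mem_colon_singleton] at this
  refine isAssociatedPrime_iff.2 ⟨p.isPrime, ⟨x, hxa⟩, ?_⟩
  rw [hx]
  ext r
  simp [mem_colon_singleton, Subtype.ext_iff]

lemma inDimensionLT_of_forall_exists_fg_notMem_support_quotient {e : ℕ}
    {W : Set (PrimeSpectrum R)} (hW : W.Finite)
    (hF : ∀ p ∈ W, ∃ F : Submodule R C, F.FG ∧ p ∉ support R (C ⧸ F))
    (hC : ∀ p ∈ support R C, p ∉ W → Order.coheight p < e) : InDimensionLT R e C := by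
  choose! F hFfg hF using hF
  refine ⟨⨆ p ∈ hW.toFinset, F p, fg_biSup _ _ fun p hp => hFfg p (hW.mem_toFinset.1 hp),
    fun p hp => hC p (support_subset_of_surjective _ (mkQ_surjective _) hp) fun hpW => ?_⟩
  have hle : F p ≤ ⨆ p ∈ hW.toFinset, F p :=
    le_iSup₂_of_le p (hW.mem_toFinset.2 hpW) le_rfl
  exact hF p hpW (support_subset_of_surjective _ (factor_surjective hle) hp)

variable [IsNoetherianRing R]

lemma finite_setOf_isAssociatedPrime_notMem_support_quotient {L : Submodule R C} (hL : L.FG) :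
    {p : PrimeSpectrum R | IsAssociatedPrime p.asIdeal C ∧ p ∉ support R (C ⧸ L)}.Finite := by
  have := Module.Finite.iff_fg.2 hL
  refine ((associatedPrimes.finite R L).preimage fun _ _ _ _ => PrimeSpectrum.ext).subset
    fun p ⟨hp, hpL⟩ => ?_
  obtain h | h := associatedPrimes.subset_union_of_exact L.injective_subtype
    (LinearMap.exact_subtype_mkQ L) hp
  · exact h
  · obtain ⟨-, c, hc⟩ := isAssociatedPrime_iff.1 h
    exact absurd (mem_support_iff_exists_colon_le.2 ⟨c, hc.ge⟩) hpL

lemma exists_forall_inDimensionLT_quotSMulTop_of_support {a : Ideal R} {e : ℕ}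
    (haC : support R C ⊆ PrimeSpectrum.zeroLocus a)
    (heC : ∀ p ∈ support R C, Order.coheight p < (e + 1 : ℕ))
    (hC : InDimensionLT R e (torsionBySet R C a)) :
    ∃ W : Set (PrimeSpectrum R), W.Finite ∧ (∀ p ∈ W, ¬ a ≤ p.asIdeal) ∧
      ∀ x, (∀ p ∈ W, x ∉ p.asIdeal) → InDimensionLT R e (QuotSMulTop x C) := by
  obtain ⟨L, hL, hLe⟩ := hC
  -- Over the primes `p ∈ T`, which are minimal in the support, `C_p` is artinian.
  let T := {p ∈ support R C | ¬ Order.coheight p < e}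
  have hmin (p) (hp : p ∈ T) (q) (hq : q ∈ support R C) : ¬ q < p := fun hqp => by
    have h1 := (Order.coheight_add_one_le hqp).trans_lt (heC q hq)
    exact hp.2 (by simpa using h1)
  have hTL (p) (hp : p ∈ T) : p ∉ support R (torsionBySet R C a ⧸ L) := fun h => hp.2 (hLe p h)
  have hT : T.Finite :=
    (finite_setOf_isAssociatedPrime_notMem_support_quotient hL).subset fun p hp =>
      ⟨isAssociatedPrime_torsionBySet_of_forall_not_lt hp.1 (hmin p hp) (haC hp.1), hTL p hp⟩
  choose! W hW haW hWfg using fun p hp => exists_forall_exists_fg_notMem_support_quotSMulTop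
    (hmin p hp) (haC hp.1) hL (hTL p hp)
  refine ⟨⋃ p ∈ T, W p, hT.biUnion hW, ?_, fun x hx => ?_⟩
  · intro q hq
    obtain ⟨p, hp, hqp⟩ := Set.mem_iUnion₂.1 hq
    exact haW p hp q hqp
  · refine inDimensionLT_of_forall_exists_fg_notMem_support_quotient hT
      (fun p hp => hWfg p hp x fun q hq => hx q (Set.mem_biUnion hp hq)) fun p hp hpT => ?_
    have hpC := support_subset_of_surjective _ (mkQ_surjective (x • ⊤ : Submodule R C)) hp
    exact not_not.1 fun h => hpT ⟨hpC, h⟩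

end GenericQuotient

section IsCofiniteModDim

open Module Submodule
open scoped Pointwise

lemma exists_mem_forall_notMem_of_finite {R : Type*} [CommRing R] {a b : Ideal R}
    {s : Set (Ideal R)} (hs : s.Finite) (hprime : ∀ I ∈ s, I ≠ b → I.IsPrime)
    (ha : ∀ I ∈ s, ¬ a ≤ I) : ∃ x ∈ a, ∀ I ∈ s, x ∉ I := by
  have h : ¬ (a : Set R) ⊆ ⋃ I ∈ s, (I : Set R) := fun h => by
    obtain ⟨I, hI, haI⟩ := (Ideal.subset_union_prime_finite hs (f := id) b b
      fun I hI hIb _ => hprime I hI hIb).1 h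
    exact ha I hI haI
  obtain ⟨x, hx, hxs⟩ := Set.not_subset.1 h
  exact ⟨x, hx, by simpa using hxs⟩

/-- The analogue of `a`-cofiniteness modulo the modules in dimension `< e`, for modules in dimension
`≤ e`: `N` is supported in `V(a)`, and `N[a] = Hom(R/a, N)` is in dimension `< e`. -/
structure IsCofiniteModDim {R : Type*} [CommRing R] (a : Ideal R) (e : ℕ) (N : Type*)
    [AddCommGroup N] [Module R N] : Prop where
  support_subset : support R N ⊆ PrimeSpectrum.zeroLocus a
  inDimensionLT_succ : InDimensionLT R (e + 1) N
  inDimensionLT_torsionBySet : InDimensionLT R e (torsionBySet R N a)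

namespace IsCofiniteModDim

variable {R A B C : Type*} [CommRing R] [AddCommGroup A] [Module R A]
  [AddCommGroup B] [Module R B] [AddCommGroup C] [Module R C] {f : A →ₗ[R] B} {g : B →ₗ[R] C}
  {a : Ideal R} {e : ℕ}

lemma of_subsingleton [Subsingleton A] : IsCofiniteModDim a e A where
  support_subset := by simp [support_eq_empty]
  inDimensionLT_succ := inDimensionLT_of_finite
  inDimensionLT_torsionBySet := inDimensionLT_of_finite

variable [IsNoetherianRing R]

lemma of_finite [Module.Finite R A] (ha : support R A ⊆ PrimeSpectrum.zeroLocus a) (e : ℕ) :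
    IsCofiniteModDim a e A where
  support_subset := ha
  inDimensionLT_succ := inDimensionLT_of_finite
  inDimensionLT_torsionBySet :=
    inDimensionLT_of_finite.of_injective (injective_subtype _)

lemma exists_forall_inDimensionLT_quotSMulTop (hA : IsCofiniteModDim a e A) :
    ∃ W : Set (PrimeSpectrum R), W.Finite ∧ (∀ p ∈ W, ¬ a ≤ p.asIdeal) ∧
      ∀ x, (∀ p ∈ W, x ∉ p.asIdeal) → InDimensionLT R e (QuotSMulTop x A) := by
  obtain ⟨L, hL, hLe⟩ := hA.inDimensionLT_succ
  obtain ⟨W, hW, haW, hWe⟩ := exists_forall_inDimensionLT_quotSMulTop_of_support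
    ((support_subset_of_surjective _ (mkQ_surjective L)).trans hA.support_subset) hLe
    (hA.inDimensionLT_torsionBySet.torsionBySet_quotient hL)
  have := Module.Finite.iff_fg.2 hL
  exact ⟨W, hW, haW, fun x hx =>
    (inDimensionLT_of_finite (A := QuotSMulTop x L)).of_exact (hWe x hx)
      (QuotSMulTop.map_exact x (LinearMap.exact_subtype_mkQ L) (mkQ_surjective L))⟩

lemma of_injective (hC : IsCofiniteModDim a e C) (hg : Function.Injective g) :
    IsCofiniteModDim a e B where
  support_subset := (support_subset_of_injective g hg).trans hC.support_subset
  inDimensionLT_succ := hC.inDimensionLT_succ.of_injective hg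
  inDimensionLT_torsionBySet :=
    hC.inDimensionLT_torsionBySet.of_injective (torsionBySetMap_injective hg a)

lemma of_surjective (hA : IsCofiniteModDim a e A) (hf : Function.Surjective f) :
    IsCofiniteModDim a e B where
  support_subset := (support_subset_of_surjective f hf).trans hA.support_subset
  inDimensionLT_succ := hA.inDimensionLT_succ.of_surjective hf
  inDimensionLT_torsionBySet := by
    let E : Submodule R A := (torsionBySet R B a).comap f
    obtain ⟨W, hW, haW, hWe⟩ :=
      (hA.of_injective E.injective_subtype).exists_forall_inDimensionLT_quotSMulTop
    obtain ⟨x, hxa, hxW⟩ := exists_mem_forall_notMem_of_finite (b := ⊥)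
      (hW.image PrimeSpectrum.asIdeal) (by rintro _ ⟨p, -, rfl⟩ -; exact p.isPrime)
      (Set.forall_mem_image.2 haW)
    let φ : E →ₗ[R] torsionBySet R B a := f.restrict fun _ h => h
    have hφ : Function.Surjective φ := fun ⟨b, hb⟩ => by
      obtain ⟨y, rfl⟩ := hf b
      exact ⟨⟨y, hb⟩, rfl⟩
    have hker : x • ⊤ ≤ LinearMap.ker φ := by
      rintro _ ⟨y, -, rfl⟩
      exact (map_smul φ x y).trans
        (Subtype.ext ((mem_torsionBySet_iff _ _).1 (φ y).2 ⟨x, hxa⟩))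
    refine (hWe x (fun p hp => hxW _ ⟨p, hp, rfl⟩)).of_surjective (f := liftQ _ φ hker) ?_
    rw [← LinearMap.range_eq_top, range_liftQ, LinearMap.range_eq_top]
    exact hφ

lemma of_exact (hA : IsCofiniteModDim a e A) (hC : IsCofiniteModDim a e C)
    (h : Function.Exact f g) : IsCofiniteModDim a e B where
  support_subset := (support_subset_of_exact h).trans
    (Set.union_subset hA.support_subset hC.support_subset)
  inDimensionLT_succ := hA.inDimensionLT_succ.of_exact hC.inDimensionLT_succ h
  inDimensionLT_torsionBySet := by
    have hK := hA.of_surjective f.surjective_rangeRestrict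
    have hKg : Function.Exact (LinearMap.range f).subtype g := fun b => by simpa using h b
    exact hK.inDimensionLT_torsionBySet.of_exact hC.inDimensionLT_torsionBySet
      (torsionBySetMap_exact (LinearMap.range f).injective_subtype hKg a)

lemma of_exact_lsmul (hA : IsCofiniteModDim a e A) {x : R} (hxa : x ∈ a)
    (hf : Function.Exact f (LinearMap.lsmul R B x))
    (haB : support R B ⊆ PrimeSpectrum.zeroLocus a) (hB : InDimensionLT R (e + 1) B) :
    IsCofiniteModDim a e B where
  support_subset := haB
  inDimensionLT_succ := hB
  inDimensionLT_torsionBySet := by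
    have hK := hA.of_surjective f.surjective_rangeRestrict
    have hKx : Function.Exact (LinearMap.range f).subtype (LinearMap.lsmul R B x) := fun b => by
      simpa using hf b
    refine hK.inDimensionLT_torsionBySet.of_surjective
      (f := torsionBySetMap (LinearMap.range f).subtype a) fun b =>
        (torsionBySetMap_exact (LinearMap.range f).injective_subtype hKx a b).1 (Subtype.ext ?_)
    exact (mem_torsionBySet_iff _ _).1 b.2 ⟨x, hxa⟩

end IsCofiniteModDim

end IsCofiniteModDim

section HomologyLinear

variable {C : Type*} [Category C] [Abelian C] (R : Type*) [Ring R] [Linear R C]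

instance homologyFunctor_linear {ι : Type*} (c : ComplexShape ι) (i : ι) :
    (HomologicalComplex.homologyFunctor C c i).Linear R where
  map_smul f r := ShortComplex.homologyMap_smul
    ((HomologicalComplex.shortComplexFunctor C c i).map f) r

instance derivedCategory_homologyFunctor_linear [HasDerivedCategory.{w} C] (n : ℤ) :
    (DerivedCategory.homologyFunctor C n).Linear R :=
  have : Localization.Lifting DerivedCategory.Q (HomologicalComplex.quasiIso C (.up ℤ))
      (HomologicalComplex.homologyFunctor C (.up ℤ) n) (DerivedCategory.homologyFunctor C n) :=
    ⟨DerivedCategory.homologyFunctorFactors C n⟩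
  (Localization.functor_linear_iff DerivedCategory.Q (HomologicalComplex.quasiIso C _) R
    (HomologicalComplex.homologyFunctor C (.up ℤ) n) _).1 inferInstance

end HomologyLinear

section Triangulated

open Pretriangulated

variable (R : Type*) [CommRing R] {C : Type*} [Category C] [Preadditive C] [Linear R C]
  [HasShift C ℤ]

/-- `X` has finitely generated Hom into the shifts `Y⟦i⟧` for all `i ≤ n`. -/
def HomFiniteUpTo (n : ℤ) (X Y : C) : Prop :=
  ∀ i ≤ n, Module.Finite R (X ⟶ Y⟦i⟧)

variable {R} {n : ℤ} {X X' Y : C}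

lemma HomFiniteUpTo.mono (h : HomFiniteUpTo R n X Y) {m : ℤ} (hmn : m ≤ n) :
    HomFiniteUpTo R m X Y :=
  fun i hi => h i (hi.trans hmn)

lemma HomFiniteUpTo.of_iso (h : HomFiniteUpTo R n X Y) (e : X ≅ X') : HomFiniteUpTo R n X' Y :=
  fun i hi =>
    have := h i hi
    .equiv (Linear.homCongr R e (Iso.refl _))

variable [∀ n : ℤ, (shiftFunctor C n).Additive]

variable (R X Y) in
/-- The linear version of the identification of `X⟦1⟧ ⟶ Y⟦j⟧` with `X ⟶ Y⟦i⟧`, where `i + 1 = j`. -/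
noncomputable def homShiftEquiv [∀ n : ℤ, (shiftFunctor C n).Linear R] {i j : ℤ} (h : i + 1 = j) :
    (X ⟶ Y⟦i⟧) ≃ₗ[R] (X⟦(1 : ℤ)⟧ ⟶ Y⟦j⟧) :=
  (LinearEquiv.ofBijective ((shiftFunctor C (1 : ℤ)).mapLinearMap R)
      ((Functor.FullyFaithful.ofFullyFaithful _).map_bijective _ _)).trans <|
    Linear.homCongr R (Iso.refl _) ((shiftFunctorAdd' C i 1 j h).app Y).symm

lemma HomFiniteUpTo.shift [∀ n : ℤ, (shiftFunctor C n).Linear R] (h : HomFiniteUpTo R n X Y) :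
    HomFiniteUpTo R (n + 1) (X⟦(1 : ℤ)⟧) Y := fun i hi =>
  have := h (i - 1) (by lia)
  .equiv (homShiftEquiv R X Y (sub_add_cancel i 1))

variable [Limits.HasZeroObject C] [Pretriangulated C] {T : Triangle C} (hT : T ∈ distTriang C)
include hT

variable (R) in
lemma exact_leftComp₂ (W : C) :
    Function.Exact (Linear.leftComp R W T.mor₂) (Linear.leftComp R W T.mor₁) := fun f =>
  ⟨fun hf => (T.yoneda_exact₂ hT f hf).imp fun _ h => h.symm, by
    rintro ⟨g, rfl⟩
    simp [comp_distTriang_mor_zero₁₂_assoc T hT]⟩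

variable (R) in
lemma exact_leftComp₃ (W : C) :
    Function.Exact (Linear.leftComp R W T.mor₃) (Linear.leftComp R W T.mor₂) := fun f =>
  ⟨fun hf => (T.yoneda_exact₃ hT f hf).imp fun _ h => h.symm, by
    rintro ⟨g, rfl⟩
    simp [comp_distTriang_mor_zero₂₃_assoc T hT]⟩

variable [IsNoetherianRing R]

lemma HomFiniteUpTo.obj₂ (h₁ : HomFiniteUpTo R n T.obj₁ Y) (h₃ : HomFiniteUpTo R n T.obj₃ Y) :
    HomFiniteUpTo R n T.obj₂ Y := fun i hi =>
  have := h₁ i hi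
  have := h₃ i hi
  module_finite_of_exact (exact_leftComp₂ R hT _)

lemma HomFiniteUpTo.obj₃ [∀ n : ℤ, (shiftFunctor C n).Linear R]
    (h₁ : HomFiniteUpTo R n T.obj₁ Y) (h₂ : HomFiniteUpTo R (n + 1) T.obj₂ Y) :
    HomFiniteUpTo R (n + 1) T.obj₃ Y := fun i hi =>
  have := h₁.shift i hi
  have := h₂ i hi
  module_finite_of_exact (exact_leftComp₃ R hT _)

end Triangulated

section MultiplicationTriangle

open Pretriangulated
open scoped Pointwise

variable {R : Type*} [CommRing R] {C : Type*} [Category C] [Preadditive C] [Linear R C]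
  [HasShift C ℤ] [∀ n : ℤ, (shiftFunctor C n).Additive]
  [Limits.HasZeroObject C] [Pretriangulated C] {X Z : C} {x : R} {g : X ⟶ Z} {h : Z ⟶ X⟦(1 : ℤ)⟧}
  (hT : Triangle.mk (x • 𝟙 X) g h ∈ distTriang C)
include hT

lemma exact_leftComp_lsmul (W : C) :
    Function.Exact (Linear.leftComp R W g) (LinearMap.lsmul R (X ⟶ W) x) := by
  have : LinearMap.lsmul R (X ⟶ W) x = Linear.leftComp R W (x • 𝟙 X) := by ext; simp
  rw [this]
  exact exact_leftComp₂ R hT W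

lemma smul_smul_id_eq_zero {s : R} (hg : s • g = 0) (hh : s • h = 0) : s • s • 𝟙 Z = 0 := by
  obtain ⟨φ : X⟦(1 : ℤ)⟧ ⟶ Z, hφ : s • 𝟙 Z = h ≫ φ⟩ :=
    Triangle.yoneda_exact₃ _ hT (s • 𝟙 Z) (by
      change g ≫ (s • 𝟙 Z) = 0
      rw [Linear.comp_smul, Category.comp_id, hg])
  rw [hφ, ← Linear.smul_comp, hh, Limits.zero_comp]

lemma smul_mor₂_eq_zero : x • g = 0 := by
  have : (x • 𝟙 X) ≫ g = 0 := comp_distTriang_mor_zero₁₂ _ hT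
  rwa [Linear.smul_comp, Category.id_comp] at this

variable [∀ n : ℤ, (shiftFunctor C n).Linear R]

lemma smul_mor₃_eq_zero : x • h = 0 := by
  have : h ≫ (shiftFunctor C (1 : ℤ)).map (x • 𝟙 X) = 0 := comp_distTriang_mor_zero₃₁ _ hT
  rwa [Functor.map_smul, CategoryTheory.Functor.map_id, Linear.comp_smul, Category.comp_id] at this

lemma exists_exact_quotSMulTop (Y : C) {i j : ℤ} (hij : i + 1 = j) :
    ∃ f : QuotSMulTop x (X ⟶ Y⟦i⟧) →ₗ[R] (Z ⟶ Y⟦j⟧),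
      Function.Exact f (Linear.leftComp R (Y⟦j⟧) g) := by
  let δ : (X ⟶ Y⟦i⟧) →ₗ[R] (Z ⟶ Y⟦j⟧) :=
    Linear.leftComp R (Y⟦j⟧) h ∘ₗ (homShiftEquiv R X Y hij).toLinearMap
  have hδ : x • (⊤ : Submodule R (X ⟶ Y⟦i⟧)) ≤ LinearMap.ker δ := by
    rintro _ ⟨φ, -, rfl⟩
    simp [δ, ← Linear.smul_comp, smul_mor₃_eq_zero hT]
  refine ⟨Submodule.liftQ _ δ hδ, LinearMap.exact_iff.2 ?_⟩
  rw [Submodule.range_liftQ, LinearMap.range_comp_of_range_eq_top _ (LinearEquiv.range _)]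
  exact (exact_leftComp₃ R hT _).linearMap_ker_eq

end MultiplicationTriangle

section Transfer

open Pretriangulated DerivedCategory

variable {R : Type u} [CommRing R] [HasDerivedCategory.{w} (ModuleCat.{u} R)]

instance single_shift_isGE (M : ModuleCat.{u} R) (i : ℤ) :
    (((singleFunctor (ModuleCat.{u} R) 0).obj M)⟦i⟧).IsGE (-i) :=
  TStructure.t.isGE_shift _ 0 i (-i)

lemma subsingleton_hom_of_neg (X : DerivedCategory (ModuleCat.{u} R)) [X.IsLE 0]
    (M : ModuleCat.{u} R) {i : ℤ} (hi : i < 0) :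
    Subsingleton (X ⟶ ((singleFunctor (ModuleCat.{u} R) 0).obj M)⟦i⟧) :=
  ⟨fun f g => by rw [TStructure.t.zero f 0 (-i), TStructure.t.zero g 0 (-i)]⟩

lemma homFiniteUpTo_of_neg {n : ℤ} (hn : n < 0) (X : DerivedCategory (ModuleCat.{u} R)) [X.IsLE 0]
    (M : ModuleCat.{u} R) : HomFiniteUpTo R n X ((singleFunctor (ModuleCat.{u} R) 0).obj M) :=
  fun _ hi =>
    have := subsingleton_hom_of_neg X M (hi.trans_lt hn)
    inferInstance

lemma homFiniteUpTo_natCast_iff {n : ℕ} (X : DerivedCategory (ModuleCat.{u} R)) [X.IsLE 0]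
    (M : ModuleCat.{u} R) :
    HomFiniteUpTo R n X ((singleFunctor (ModuleCat.{u} R) 0).obj M) ↔ ∀ i : ℕ, i ≤ n →
      Module.Finite R (X ⟶ ((singleFunctor (ModuleCat.{u} R) 0).obj M)⟦(i : ℤ)⟧) := by
  refine ⟨fun h i hi => h i (mod_cast hi), fun h i hi => ?_⟩
  obtain hneg | hnonneg := lt_or_ge i 0
  · exact homFiniteUpTo_of_neg hneg X M i le_rfl
  · lift i to ℕ using hnonneg
    exact h i (mod_cast hi)

/-- The objects of the derived category with finitely generated homology supported in `V(a)`. -/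
def HasFiniteHomologyOn (a : Ideal R) (X : DerivedCategory (ModuleCat.{u} R)) : Prop :=
  ∀ i, Module.Finite R ((homologyFunctor (ModuleCat.{u} R) i).obj X) ∧
    Module.support R ((homologyFunctor (ModuleCat.{u} R) i).obj X) ⊆ PrimeSpectrum.zeroLocus a

lemma homology_exact₁ {T : Triangle (DerivedCategory (ModuleCat.{u} R))}
    (hT : T ∈ distTriang _) {i j : ℤ} (h : i + 1 = j) :
    Function.Exact (HomologySequence.δ T i j h).hom
      ((homologyFunctor (ModuleCat.{u} R) j).map T.mor₁).hom :=
  (ShortComplex.ShortExact.moduleCat_exact_iff_function_exact _).1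
    (HomologySequence.exact₁ T hT i j h)

lemma homology_exact₂ {T : Triangle (DerivedCategory (ModuleCat.{u} R))}
    (hT : T ∈ distTriang _) (i : ℤ) :
    Function.Exact ((homologyFunctor (ModuleCat.{u} R) i).map T.mor₁).hom
      ((homologyFunctor (ModuleCat.{u} R) i).map T.mor₂).hom :=
  (ShortComplex.ShortExact.moduleCat_exact_iff_function_exact _).1
    (HomologySequence.exact₂ T hT i)

lemma homology_exact₃ {T : Triangle (DerivedCategory (ModuleCat.{u} R))}
    (hT : T ∈ distTriang _) {i j : ℤ} (h : i + 1 = j) :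
    Function.Exact ((homologyFunctor (ModuleCat.{u} R) i).map T.mor₂).hom
      (HomologySequence.δ T i j h).hom :=
  (ShortComplex.ShortExact.moduleCat_exact_iff_function_exact _).1
    (HomologySequence.exact₃ T hT i j h)

variable {a : Ideal R}

lemma HasFiniteHomologyOn.of_iso {X Y : DerivedCategory (ModuleCat.{u} R)}
    (h : HasFiniteHomologyOn a X) (e : X ≅ Y) : HasFiniteHomologyOn a Y := fun i =>
  let e' := ((homologyFunctor (ModuleCat.{u} R) i).mapIso e).toLinearEquiv
  have := (h i).1
  ⟨.equiv e', e'.support_eq ▸ (h i).2⟩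

lemma HasFiniteHomologyOn.shift {X : DerivedCategory (ModuleCat.{u} R)}
    (h : HasFiniteHomologyOn a X) (n : ℤ) : HasFiniteHomologyOn a (X⟦n⟧) := fun i =>
  let e : (homologyFunctor (ModuleCat.{u} R) (n + i)).obj X ≅
      (homologyFunctor (ModuleCat.{u} R) i).obj (X⟦n⟧) :=
    (((homologyFunctor (ModuleCat.{u} R) 0).shiftIso n i (n + i) rfl).app X).symm
  have := (h (n + i)).1
  ⟨.equiv e.toLinearEquiv, e.toLinearEquiv.support_eq ▸ (h (n + i)).2⟩

lemma HasFiniteHomologyOn.single {N : ModuleCat.{u} R} [Module.Finite R N]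
    (hN : Module.support R N ⊆ PrimeSpectrum.zeroLocus a) :
    HasFiniteHomologyOn a ((singleFunctor (ModuleCat.{u} R) 0).obj N) := by
  intro i
  obtain rfl | hi := eq_or_ne i 0
  · let e : N ≅ (homologyFunctor (ModuleCat.{u} R) 0).obj
        ((singleFunctor (ModuleCat.{u} R) 0).obj N) :=
      ((singleFunctorCompHomologyFunctorIso _ 0).app N).symm
    exact ⟨.equiv e.toLinearEquiv, e.toLinearEquiv.support_eq ▸ hN⟩
  · have : Subsingleton ((homologyFunctor (ModuleCat.{u} R) i).obj
        ((singleFunctor (ModuleCat.{u} R) 0).obj N)) :=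
      ModuleCat.subsingleton_of_isZero (hi.lt_or_gt.elim
        (fun hi => isZero_of_isGE _ 0 i hi) (fun hi => isZero_of_isLE _ 0 i hi))
    exact ⟨inferInstance, Module.support_eq_empty.subset.trans (Set.empty_subset _)⟩

lemma exists_truncation_triangle (X : DerivedCategory (ModuleCat.{u} R)) [X.IsLE 0] :
    ∃ T ∈ distTriang (DerivedCategory (ModuleCat.{u} R)), T.obj₂ = X ∧ T.obj₁.IsLE (-1) ∧
      Nonempty (T.obj₃ ≅ (singleFunctor (ModuleCat.{u} R) 0).obj
        ((homologyFunctor (ModuleCat.{u} R) 0).obj X)) := by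
  obtain ⟨X', X'', hX', hX'', f, g, h, hT⟩ := TStructure.t.exists_triangle X (-1) 0 rfl
  have : X'.IsLE (-1) := ⟨hX'⟩
  have : X''.IsGE 0 := ⟨hX''⟩
  have : X''.IsLE 0 := (X''.isLE_iff 0).2 fun i hi =>
    (HomologySequence.exact₃ _ hT i (i + 1) rfl).isZero_X₂
      ((isZero_of_isLE X 0 i hi).eq_of_src _ _) ((isZero_of_isLE X' (-1) _ (by lia)).eq_of_tgt _ _)
  have : Epi ((homologyFunctor (ModuleCat.{u} R) 0).map g) :=
    (HomologySequence.epi_homologyMap_mor₂_iff _ hT 0 1 rfl).2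
      ((isZero_of_isLE X' (-1) 1 (by lia)).eq_of_tgt _ _)
  have : Mono ((homologyFunctor (ModuleCat.{u} R) 0).map g) :=
    (HomologySequence.mono_homologyMap_mor₂_iff _ hT 0).2
      ((isZero_of_isLE X' (-1) 0 (by lia)).eq_of_src _ _)
  have : IsIso ((homologyFunctor (ModuleCat.{u} R) 0).map g) := isIso_of_mono_of_epi _
  obtain ⟨N, ⟨e⟩⟩ := exists_iso_singleFunctor_obj_of_isGE_of_isLE X'' 0
  let e₀ : N ≅ (homologyFunctor (ModuleCat.{u} R) 0).obj X :=
    ((singleFunctorCompHomologyFunctorIso _ 0).app N).symm ≪≫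
      (homologyFunctor _ 0).mapIso e.symm ≪≫ (asIso ((homologyFunctor _ 0).map g)).symm
  exact ⟨_, hT, rfl, ‹_›, ⟨e ≪≫ (singleFunctor _ 0).mapIso e₀⟩⟩

variable [IsNoetherianRing R]

lemma HasFiniteHomologyOn.obj₁ {T : Triangle (DerivedCategory (ModuleCat.{u} R))}
    (hT : T ∈ distTriang _) (h₂ : HasFiniteHomologyOn a T.obj₂)
    (h₃ : HasFiniteHomologyOn a T.obj₃) :
    HasFiniteHomologyOn a T.obj₁ := fun i =>
  have hex := homology_exact₁ hT (sub_add_cancel i 1)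
  have := (h₂ i).1
  have := (h₃ (i - 1)).1
  ⟨module_finite_of_exact hex,
    (support_subset_of_exact hex).trans (Set.union_subset (h₃ _).2 (h₂ _).2)⟩

lemma HasFiniteHomologyOn.obj₃ {T : Triangle (DerivedCategory (ModuleCat.{u} R))}
    (hT : T ∈ distTriang _) (h₁ : HasFiniteHomologyOn a T.obj₁)
    (h₂ : HasFiniteHomologyOn a T.obj₂) :
    HasFiniteHomologyOn a T.obj₃ := fun i =>
  have hex := homology_exact₃ hT (rfl : i + 1 = _)
  have := (h₂ i).1
  have := (h₁ (i + 1)).1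
  ⟨module_finite_of_exact hex,
    (support_subset_of_exact hex).trans (Set.union_subset (h₂ _).2 (h₁ _).2)⟩

variable {n : ℤ} {M : ModuleCat.{u} R}

lemma homFiniteUpTo_single_succ
    (ih : ∀ (N : Type u) [AddCommGroup N] [Module R N] [Module.Finite R N],
      Module.support R N ⊆ PrimeSpectrum.zeroLocus a →
      HomFiniteUpTo R n ((singleFunctor _ 0).obj (ModuleCat.of R N)) ((singleFunctor _ 0).obj M))
    (h : HomFiniteUpTo R (n + 1) ((singleFunctor _ 0).obj (ModuleCat.of R (R ⧸ a)))
      ((singleFunctor _ 0).obj M))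
    (N : Type u) [AddCommGroup N] [Module R N] [Module.Finite R N]
    (hsupp : Module.support R N ⊆ PrimeSpectrum.zeroLocus a) :
    HomFiniteUpTo R (n + 1) ((singleFunctor _ 0).obj (ModuleCat.of R N))
      ((singleFunctor _ 0).obj M) := by
  induction ‹Module.Finite R N› using
    IsNoetherianRing.induction_on_isQuotientEquivQuotientPrime R with
  | subsingleton N =>
    intro i _
    have : Subsingleton ((singleFunctor _ 0).obj (ModuleCat.of R N) ⟶
        ((singleFunctor _ 0).obj M)⟦i⟧) :=
      ⟨((singleFunctor _ 0).map_isZero (ModuleCat.isZero_of_subsingleton _)).eq_of_src⟩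
    infer_instance
  | quotient N p e =>
    have hap : a ≤ p.asIdeal := by
      simpa [e.support_eq, Module.support_eq_zeroLocus, Ideal.annihilator_quotient,
        PrimeSpectrum.zeroLocus_subset_zeroLocus_iff, p.isPrime.radical] using hsupp
    have hS := LinearMap.shortExact_shortComplexKer
      (f := (Ideal.Quotient.factorₐ R hap).toLinearMap) (Ideal.Quotient.factor_surjective hap)
    have hker := ih (LinearMap.ker (Ideal.Quotient.factorₐ R hap).toLinearMap)
      ((Module.support_subset_of_injective _ (Submodule.subtype_injective _)).trans
        (by simp [Module.support_eq_zeroLocus, Ideal.annihilator_quotient]))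
    exact (HomFiniteUpTo.obj₃ hS.singleTriangle_distinguished hker h).of_iso
      ((singleFunctor _ 0).mapIso e.symm.toModuleIso)
  | exact N₁ N₂ N₃ f g hf hg hfg ih₁ ih₃ =>
    have hS : (ShortComplex.mk (ModuleCat.ofHom f) (ModuleCat.ofHom g)
        (by ext x; exact hfg.apply_apply_eq_zero x)).ShortExact :=
      ModuleCat.shortComplex_shortExact _ hfg hf hg
    exact .obj₂ hS.singleTriangle_distinguished
      (ih₁ ((Module.support_subset_of_injective f hf).trans hsupp))
      (ih₃ ((Module.support_subset_of_surjective g hg).trans hsupp))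

lemma homFiniteUpTo_succ
    (ih : ∀ X : DerivedCategory (ModuleCat.{u} R), X.IsLE 0 → HasFiniteHomologyOn a X →
      HomFiniteUpTo R n X ((singleFunctor _ 0).obj M))
    (h : HomFiniteUpTo R (n + 1) ((singleFunctor _ 0).obj (ModuleCat.of R (R ⧸ a)))
      ((singleFunctor _ 0).obj M))
    (X : DerivedCategory (ModuleCat.{u} R)) [X.IsLE 0] (hX : HasFiniteHomologyOn a X) :
    HomFiniteUpTo R (n + 1) X ((singleFunctor _ 0).obj M) := by
  obtain ⟨T, hT, rfl, hT₁, ⟨e⟩⟩ := exists_truncation_triangle X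
  have := (hX 0).1
  have hsingle : HasFiniteHomologyOn a T.obj₃ :=
    (HasFiniteHomologyOn.single (hX 0).2).of_iso e.symm
  have h₁ : HomFiniteUpTo R n (T.obj₁⟦(-1 : ℤ)⟧) ((singleFunctor _ 0).obj M) :=
    ih _ (TStructure.t.isLE_shift T.obj₁ (-1) (-1) 0) ((hX.obj₁ hT hsingle).shift _)
  have h₃ := homFiniteUpTo_single_succ (fun N _ _ _ hN => ih _ inferInstance (.single hN)) h
    _ (hX 0).2
  exact .obj₂ hT (h₁.shift.of_iso ((shiftEquiv _ (1 : ℤ)).counitIso.app _)) (h₃.of_iso e.symm)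

lemma homFiniteUpTo_quotient_succ
    (ih : ∀ X : DerivedCategory (ModuleCat.{u} R), X.IsLE 0 → HasFiniteHomologyOn a X →
      HomFiniteUpTo R n X ((singleFunctor _ 0).obj M))
    (X : DerivedCategory (ModuleCat.{u} R)) [X.IsLE 0] (hX : HasFiniteHomologyOn a X)
    (e₀ : (homologyFunctor _ 0).obj X ≅ ModuleCat.of R (R ⧸ a))
    (h : HomFiniteUpTo R (n + 1) X ((singleFunctor _ 0).obj M)) :
    HomFiniteUpTo R (n + 1) ((singleFunctor _ 0).obj (ModuleCat.of R (R ⧸ a)))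
      ((singleFunctor _ 0).obj M) := by
  obtain ⟨T, hT, rfl, hT₁, ⟨e⟩⟩ := exists_truncation_triangle X
  have := (hX 0).1
  have hsingle : HasFiniteHomologyOn a T.obj₃ :=
    (HasFiniteHomologyOn.single (hX 0).2).of_iso e.symm
  have h₁ := ih _ (TStructure.t.isLE_of_le _ (-1) 0) (hX.obj₁ hT hsingle)
  exact (HomFiniteUpTo.obj₃ hT h₁ h).of_iso (e ≪≫ (singleFunctor _ 0).mapIso e₀)

theorem homFiniteUpTo_of_quotient (n : ℕ)
    (h : HomFiniteUpTo R n ((singleFunctor _ 0).obj (ModuleCat.of R (R ⧸ a)))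
      ((singleFunctor _ 0).obj M))
    (X : DerivedCategory (ModuleCat.{u} R)) (hle : X.IsLE 0) (hX : HasFiniteHomologyOn a X) :
    HomFiniteUpTo R n X ((singleFunctor _ 0).obj M) := by
  induction n generalizing X with
  | zero =>
    simpa using homFiniteUpTo_succ (n := -1)
      (fun X _ _ => homFiniteUpTo_of_neg (by simp) X M) (by simpa using h) X hX
  | succ n ih => exact homFiniteUpTo_succ (ih (h.mono (by simp))) h X hX

theorem homFiniteUpTo_quotient (n : ℕ) (X : DerivedCategory (ModuleCat.{u} R)) [X.IsLE 0]
    (hX : HasFiniteHomologyOn a X) (e₀ : (homologyFunctor _ 0).obj X ≅ ModuleCat.of R (R ⧸ a))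
    (h : HomFiniteUpTo R n X ((singleFunctor _ 0).obj M)) :
    HomFiniteUpTo R n ((singleFunctor _ 0).obj (ModuleCat.of R (R ⧸ a)))
      ((singleFunctor _ 0).obj M) := by
  induction n with
  | zero =>
    simpa using homFiniteUpTo_quotient_succ (n := -1)
      (fun X _ _ => homFiniteUpTo_of_neg (by simp) X M) X hX e₀ (by simpa using h)
  | succ n ih =>
    exact homFiniteUpTo_quotient_succ
      (homFiniteUpTo_of_quotient n (ih (h.mono (by simp)))) X hX e₀ h

end Transfer

section Koszul

open Pretriangulated DerivedCategory

variable {R : Type u} [CommRing R] [HasDerivedCategory.{w} (ModuleCat.{u} R)]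

/-- The Koszul complex of a list of elements of `R` in the derived category, built as an iterated
cone of multiplications, with its generator in cohomological degree `0` at the right end. -/
noncomputable def koszul : List R → DerivedCategory (ModuleCat.{u} R)
  | [] => (singleFunctor _ 0).obj (ModuleCat.of R R)
  | x :: l => (distinguished_cocone_triangle (x • 𝟙 (koszul l))).choose

lemma exists_koszul_triangle (x : R) (l : List R) :
    ∃ (g : koszul l ⟶ koszul (x :: l)) (h : koszul (x :: l) ⟶ (koszul l)⟦(1 : ℤ)⟧),
      Triangle.mk (x • 𝟙 (koszul l)) g h ∈ distTriang _ :=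
  (distinguished_cocone_triangle (x • 𝟙 (koszul l))).choose_spec

instance koszul_isLE (l : List R) : (koszul l).IsLE 0 := by
  induction l with
  | nil => exact inferInstanceAs (((singleFunctor _ 0).obj _).IsLE 0)
  | cons x l ih =>
    obtain ⟨g, h, hT⟩ := exists_koszul_triangle x l
    exact (isLE_iff _ 0).2 fun i hi => (HomologySequence.exact₃ _ hT i (i + 1) rfl).isZero_X₂
      ((isZero_of_isLE (koszul l) 0 i hi).eq_of_src _ _)
      ((isZero_of_isLE (koszul l) 0 (i + 1) (by lia)).eq_of_tgt _ _)

lemma ofList_le_radical_annihilator_end (l : List R) :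
    Ideal.ofList l ≤ (Module.annihilator R (koszul l ⟶ koszul l)).radical := by
  induction l with
  | nil => simp
  | cons x l ih =>
    obtain ⟨g, h, hT⟩ := exists_koszul_triangle x l
    have mem_radical {s : R} (hg : s • g = 0) (hh : s • h = 0) :
        s ^ 2 ∈ Module.annihilator R (koszul (x :: l) ⟶ koszul (x :: l)) :=
      Module.mem_annihilator.2 fun φ => by
        rw [← Category.id_comp φ, ← Linear.smul_comp, sq, mul_smul, smul_smul_id_eq_zero hT hg hh,
          Limits.zero_comp]
    rw [Ideal.ofList_cons, sup_le_iff, Ideal.span_singleton_le_iff_mem]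
    refine ⟨⟨2, mem_radical (smul_mor₂_eq_zero hT) (smul_mor₃_eq_zero hT)⟩, fun y hy => ?_⟩
    obtain ⟨n, hn⟩ := ih hy
    have hid : y ^ n • 𝟙 (koszul l) = 0 := Module.mem_annihilator.1 hn _
    refine ⟨n * 2, pow_mul y n 2 ▸ mem_radical ?_ ?_⟩
    · rw [← Category.id_comp g, ← Linear.smul_comp, hid, Limits.zero_comp]
    · rw [← Category.comp_id h, ← Linear.comp_smul, ← CategoryTheory.Functor.map_id,
        ← Functor.map_smul, hid, Functor.map_zero, Limits.comp_zero]

lemma ofList_le_radical_annihilator_hom (l : List R) (Y : DerivedCategory (ModuleCat.{u} R)) :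
    Ideal.ofList l ≤ (Module.annihilator R (koszul l ⟶ Y)).radical :=
  (ofList_le_radical_annihilator_end l).trans <| Ideal.radical_mono fun s hs =>
    Module.mem_annihilator.2 fun f => by
      rw [← Category.id_comp f, ← Linear.smul_comp, Module.mem_annihilator.1 hs,
        Limits.zero_comp]

lemma ofList_le_radical_annihilator_homology (l : List R) (i : ℤ) :
    Ideal.ofList l ≤
      (Module.annihilator R ((homologyFunctor (ModuleCat.{u} R) i).obj (koszul l))).radical :=
  (ofList_le_radical_annihilator_end l).trans <| Ideal.radical_mono fun s hs =>
    Module.mem_annihilator.2 fun z => by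
      have hid : s • 𝟙 ((homologyFunctor (ModuleCat.{u} R) i).obj (koszul l)) = 0 := by
        rw [← CategoryTheory.Functor.map_id, ← Functor.map_smul, Module.mem_annihilator.1 hs,
          Functor.map_zero]
      exact congr(($hid).hom z)

lemma nonempty_homology_zero_koszul_iso (l : List R) :
    Nonempty ((homologyFunctor (ModuleCat.{u} R) 0).obj (koszul l) ≅
      ModuleCat.of R (R ⧸ Ideal.ofList l)) := by
  suffices ∃ f : R →ₗ[R] (homologyFunctor (ModuleCat.{u} R) 0).obj (koszul l),
      Function.Surjective f ∧ LinearMap.ker f = Ideal.ofList l by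
    obtain ⟨f, hf, hker⟩ := this
    exact ⟨((Submodule.quotEquivOfEq _ _ hker.symm).trans
      (f.quotKerEquivOfSurjective hf)).symm.toModuleIso⟩
  induction l with
  | nil =>
    let e : ModuleCat.of R R ≅ (homologyFunctor (ModuleCat.{u} R) 0).obj (koszul []) :=
      ((singleFunctorCompHomologyFunctorIso _ 0).app _).symm
    exact ⟨e.toLinearEquiv, e.toLinearEquiv.surjective,
      e.toLinearEquiv.ker.trans Ideal.ofList_nil.symm⟩
  | cons x l ih =>
    obtain ⟨f, hf, hker⟩ := ih
    obtain ⟨g, h, hT⟩ := exists_koszul_triangle x l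
    have hex := homology_exact₂ hT 0
    have : Epi ((homologyFunctor (ModuleCat.{u} R) 0).map g) :=
      (HomologySequence.epi_homologyMap_mor₂_iff _ hT 0 1 rfl).2
        ((isZero_of_isLE (koszul l) 0 1 (by lia)).eq_of_tgt _ _)
    refine ⟨((homologyFunctor (ModuleCat.{u} R) 0).map g).hom ∘ₗ f,
      ((ModuleCat.epi_iff_surjective _).1 this).comp hf, ?_⟩
    ext r
    have hmap (z) : ((homologyFunctor (ModuleCat.{u} R) 0).map (x • 𝟙 (koszul l))).hom z =
        x • z := by
      rw [Functor.map_smul, CategoryTheory.Functor.map_id]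
      rfl
    calc r ∈ LinearMap.ker (((homologyFunctor (ModuleCat.{u} R) 0).map g).hom ∘ₗ f)
      _ ↔ ∃ z, x • z = f r := (hex (f r)).trans (exists_congr fun z => Eq.congr_left (hmap z))
      _ ↔ ∃ s, x • f s = f r := hf.exists
      _ ↔ ∃ s, r - s * x ∈ Ideal.ofList l := exists_congr fun s => by
        rw [← hker, LinearMap.sub_mem_ker_iff, mul_comm, ← smul_eq_mul, map_smul, eq_comm]
      _ ↔ r ∈ Ideal.ofList (x :: l) := by
        rw [Ideal.ofList_cons, Ideal.mem_span_singleton_sup]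
        exact exists_congr fun s => ⟨fun hs => ⟨_, hs, by ring⟩, by rintro ⟨b, hb, rfl⟩; simpa⟩

variable [IsNoetherianRing R]

lemma hasFiniteHomologyOn_koszul (l : List R) :
    HasFiniteHomologyOn (Ideal.ofList l) (koszul l) := by
  suffices HasFiniteHomologyOn ⊥ (koszul l) from fun i =>
    ⟨(this i).1, support_subset_zeroLocus_of_le_radical_annihilator
      (ofList_le_radical_annihilator_homology l i)⟩
  induction l with
  | nil => exact .single (by simp)
  | cons x l ih =>
    obtain ⟨g, h, hT⟩ := exists_koszul_triangle x l
    exact .obj₃ hT ih ih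

end Koszul

section Ext

variable {R : Type*} [CommRing R] {C : Type*} [Category C] [Abelian C] [Linear R C]

instance preservesFiniteLimits_linearYoneda_obj (Y : C) :
    Limits.PreservesFiniteLimits ((linearYoneda R C).obj Y) :=
  have : Limits.PreservesFiniteLimits ((linearYoneda R C).obj Y ⋙ forget (ModuleCat R)) :=
    inferInstanceAs (Limits.PreservesFiniteLimits (yoneda.obj Y))
  Limits.preservesFiniteLimits_of_reflects_of_preserves _ (forget (ModuleCat R))

section Cocycle

variable [HasExt.{w} C] {X : C} (P : ProjectiveResolution X) (Y : C) (n : ℕ)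

variable (R) in
/-- The short complex `Hom(Pₙ, Y) ⟶ Hom(Pₙ₊₁, Y) ⟶ Hom(Pₙ₊₂, Y)` of a
projective resolution `P`. -/
noncomputable abbrev homShortComplex : ShortComplex (ModuleCat R) :=
  (P.complex.linearYonedaObj R Y).sc' n (n + 1) (n + 2)

variable (R) in
/-- The class in `Ext` of a cocycle on a projective resolution, as a linear map. -/
noncomputable def cocycleToExt :
    LinearMap.ker (homShortComplex R P Y n).g.hom →ₗ[R] Abelian.Ext X Y (n + 1) where
  toFun c := P.extMk c.1 (n + 2) rfl c.2
  map_add' c c' := (P.add_extMk ..).symm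
  map_smul' r c := by
    rw [RingHom.id_apply, Abelian.Ext.smul_eq_comp_mk₀]
    refine Eq.trans ?_ (P.extMk_comp_mk₀ ..).symm
    let f : P.complex.X (n + 1) ⟶ Y := c.1
    congr 1
    exact (show f ≫ (r • 𝟙 Y) = r • f by simp).symm

lemma cocycleToExt_surjective : Function.Surjective (cocycleToExt R P Y n) := fun α => by
  obtain ⟨f, hf, rfl⟩ := P.extMk_surjective α (n + 2) rfl
  exact ⟨⟨f, hf⟩, rfl⟩

lemma ker_cocycleToExt :
    LinearMap.ker (cocycleToExt R P Y n) =
      LinearMap.range (homShortComplex R P Y n).moduleCatToCycles := by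
  ext c
  refine (P.extMk_eq_zero_iff c.1 (n + 2) rfl c.2 n rfl).trans (exists_congr fun g => ?_)
  rw [Subtype.ext_iff]
  rfl

end Cocycle

variable [EnoughProjectives C]

lemma nonempty_extZero_iso (X Y : C) :
    Nonempty (((Ext R C 0).obj (Opposite.op X)).obj Y ≅ ModuleCat.of R (X ⟶ Y)) :=
  have := Limits.preservesFiniteColimits_rightOp ((linearYoneda R C).obj Y)
  ⟨(((linearYoneda R C).obj Y).rightOp.leftDerivedZeroIsoSelf.app X).unop.symm⟩

variable [HasExt.{w} C]

lemma nonempty_extSucc_linearEquiv (X Y : C) (n : ℕ) :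
    Nonempty (((Ext R C (n + 1)).obj (Opposite.op X)).obj Y ≃ₗ[R] Abelian.Ext X Y (n + 1)) := by
  let P := projectiveResolution X
  let e : ((Ext R C (n + 1)).obj (Opposite.op X)).obj Y ≅
      (homShortComplex R P Y n).moduleCatLeftHomologyData.H :=
    P.isoExt (n + 1) Y ≪≫
      ShortComplex.homologyMapIso
        (HomologicalComplex.isoSc' _ n (n + 1) (n + 2) (by simp) (by simp)) ≪≫
      (homShortComplex R P Y n).moduleCatHomologyIso
  exact ⟨e.toLinearEquiv ≪≫ₗ Submodule.quotEquivOfEq _ _ (ker_cocycleToExt P Y n).symm ≪≫ₗ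
    (cocycleToExt R P Y n).quotKerEquivOfSurjective (cocycleToExt_surjective P Y n)⟩

lemma nonempty_ext_linearEquiv (X Y : C) (n : ℕ) :
    Nonempty (((Ext R C n).obj (Opposite.op X)).obj Y ≃ₗ[R] Abelian.Ext X Y n) := by
  cases n with
  | zero => exact (nonempty_extZero_iso X Y).map fun e =>
      e.toLinearEquiv ≪≫ₗ Abelian.Ext.linearEquiv₀.symm
  | succ n => exact nonempty_extSucc_linearEquiv X Y n

end Ext

section KoszulCohomology

open Pretriangulated DerivedCategory

variable {R : Type u} [CommRing R] [HasDerivedCategory.{w} (ModuleCat.{u} R)]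

/-- The `i`-th Koszul cohomology of `M` with respect to `l`, in the form
`Hom(koszul l, M⟦i⟧)`. -/
def koszulCohomology (l : List R) (M : ModuleCat.{u} R) (i : ℕ) : Type w :=
  koszul l ⟶ ((singleFunctor (ModuleCat.{u} R) 0).obj M)⟦(i : ℤ)⟧

variable (l : List R) (M : ModuleCat.{u} R) (i : ℕ)

noncomputable instance koszulCohomology_addCommGroup : AddCommGroup (koszulCohomology l M i) :=
  inferInstanceAs (AddCommGroup (koszul l ⟶ ((singleFunctor (ModuleCat.{u} R) 0).obj M)⟦(i : ℤ)⟧))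

noncomputable instance koszulCohomology_module : Module R (koszulCohomology l M i) :=
  inferInstanceAs (Module R (koszul l ⟶ ((singleFunctor (ModuleCat.{u} R) 0).obj M)⟦(i : ℤ)⟧))

variable {i} in
lemma subsingleton_koszulCohomology_nil (hi : i ≠ 0) : Subsingleton (koszulCohomology [] M i) := by
  obtain ⟨i, rfl⟩ := Nat.exists_eq_succ_of_ne_zero hi
  have : Subsingleton (Abelian.Ext (ModuleCat.of R R) M (i + 1)) :=
    ⟨fun x y => by rw [x.eq_zero_of_projective, y.eq_zero_of_projective]⟩
  exact Abelian.Ext.homEquiv.symm.subsingleton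

lemma nonempty_koszulCohomology_nil_zero : Nonempty (koszulCohomology [] M 0 ≃ₗ[R] M) :=
  ⟨Abelian.Ext.homLinearEquiv.symm ≪≫ₗ Abelian.Ext.linearEquiv₀ ≪≫ₗ
    ModuleCat.homLinearEquiv ≪≫ₗ LinearMap.ringLmapEquivSelf R R M⟩

lemma ofList_le_radical_annihilator_koszulCohomology :
    Ideal.ofList l ≤ (Module.annihilator R (koszulCohomology l M i)).radical :=
  ofList_le_radical_annihilator_hom l _

lemma exists_exact_koszulCohomology_lsmul (x : R) :
    ∃ g : koszulCohomology (x :: l) M i →ₗ[R] koszulCohomology l M i,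
      Function.Exact g (LinearMap.lsmul R _ x) :=
  have ⟨_, _, hT⟩ := exists_koszul_triangle x l
  ⟨_, exact_leftComp_lsmul hT _⟩

lemma exists_exact_koszulCohomology_succ (x : R) :
    ∃ (f : QuotSMulTop x (koszulCohomology l M i) →ₗ[R] koszulCohomology (x :: l) M (i + 1))
      (g : koszulCohomology (x :: l) M (i + 1) →ₗ[R] koszulCohomology l M (i + 1)),
      Function.Exact f g :=
  have ⟨_, _, hT⟩ := exists_koszul_triangle x l
  have ⟨f, hf⟩ := exists_exact_quotSMulTop hT ((singleFunctor (ModuleCat.{u} R) 0).obj M)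
    (Nat.cast_succ i).symm
  ⟨f, _, hf⟩

lemma exists_injective_koszulCohomology_zero (x : R) :
    ∃ g : koszulCohomology (x :: l) M 0 →ₗ[R] koszulCohomology l M 0, Function.Injective g := by
  obtain ⟨g, h, hT⟩ := exists_koszul_triangle x l
  obtain ⟨f, hf⟩ := exists_exact_quotSMulTop hT ((singleFunctor (ModuleCat.{u} R) 0).obj M)
    (neg_add_cancel 1)
  have := subsingleton_hom_of_neg (koszul l) M (i := -1) (by simp)
  have hf₀ : f = 0 := LinearMap.ext fun z => (congrArg f (Subsingleton.elim z 0)).trans (map_zero f)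
  exact ⟨Linear.leftComp R _ g, (LinearMap.exact_zero_iff_injective _ _).1 (hf₀ ▸ hf)⟩

theorem finite_extQuot_iff (a : Ideal R) :
    Module.Finite R (extQuot a i M) ↔
      Module.Finite R ((singleFunctor (ModuleCat.{u} R) 0).obj (ModuleCat.of R (R ⧸ a)) ⟶
        ((singleFunctor (ModuleCat.{u} R) 0).obj M)⟦(i : ℤ)⟧) :=
  have ⟨e⟩ := nonempty_ext_linearEquiv (R := R) (ModuleCat.of R (R ⧸ a)) M i
  Module.Finite.equiv_iff (e ≪≫ₗ Abelian.Ext.homLinearEquiv)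

theorem finite_extQuot_iff_finite_koszulCohomology [IsNoetherianRing R] (d : ℕ) :
    (∀ i ≤ d, Module.Finite R (extQuot (Ideal.ofList l) i M)) ↔
      ∀ i ≤ d, Module.Finite R (koszulCohomology l M i) := by
  obtain ⟨e⟩ := nonempty_homology_zero_koszul_iso l
  have hl := hasFiniteHomologyOn_koszul l
  simp only [finite_extQuot_iff]
  refine (homFiniteUpTo_natCast_iff _ M).symm.trans (Iff.trans ⟨fun h => ?_, fun h => ?_⟩
    (homFiniteUpTo_natCast_iff (koszul l) M))
  · exact homFiniteUpTo_of_quotient d h _ inferInstance hl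
  · exact homFiniteUpTo_quotient d _ hl e h

end KoszulCohomology

section SmallKoszulCohomology

open Module

variable {R : Type u} [CommRing R] [HasDerivedCategory.{w} (ModuleCat.{u} R)]

lemma support_koszulCohomology_subset (l : List R) (M : ModuleCat.{u} R) (i : ℕ) :
    support R (koszulCohomology l M i) ⊆ support R M := by
  induction l generalizing i with
  | nil =>
    obtain _ | i := i
    · obtain ⟨φ⟩ := nonempty_koszulCohomology_nil_zero M
      exact φ.support_eq.subset
    · have := subsingleton_koszulCohomology_nil M i.succ_ne_zero
      simp [support_eq_empty]
  | cons x l ih =>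
    obtain _ | i := i
    · obtain ⟨g, hg⟩ := exists_injective_koszulCohomology_zero l M x
      exact (support_subset_of_injective g hg).trans (ih 0)
    · obtain ⟨f, g, h⟩ := exists_exact_koszulCohomology_succ l M i x
      exact (support_subset_of_exact h).trans (Set.union_subset
        ((support_subset_of_surjective _ (Submodule.mkQ_surjective _)).trans (ih i)) (ih (i + 1)))

/-- The condition on a sequence `l` that, for all its final segments `m`, the Koszul cohomology
`H^k(m; M)` is in dimension `< d + 1 - k` in the degrees `k ≤ j`. A generic sequence has
this property when `dim M ≤ d`; the difference is truncated, so only `j ≤ d` is of interest. -/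
def HasSmallKoszulCohomology (M : ModuleCat.{u} R) (d j : ℕ) (l : List R) : Prop :=
  ∀ m, m <:+ l → ∀ k ≤ j, InDimensionLT R (d + 1 - k) (koszulCohomology m M k)

variable {M : ModuleCat.{u} R} {a : Ideal R} {d e j k : ℕ} {l : List R}

lemma HasSmallKoszulCohomology.zero (hdim : Order.krullDim (support R M) ≤ d) (l : List R) :
    HasSmallKoszulCohomology M d 0 l := by
  rintro m - k hk
  obtain rfl := Nat.le_zero.1 hk
  exact inDimensionLT_succ_of_krullDim_support_le
    ((Order.krullDim_le_of_strictMono (Set.inclusion (support_koszulCohomology_subset m M 0))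
      fun _ _ h => h).trans hdim)

lemma HasSmallKoszulCohomology.nil (hdim : Order.krullDim (support R M) ≤ d) (j : ℕ) :
    HasSmallKoszulCohomology M d j [] := by
  rintro m hm k -
  obtain rfl | hk := eq_or_ne k 0
  · exact zero hdim [] m hm 0 le_rfl
  · obtain rfl := List.suffix_nil.1 hm
    have := subsingleton_koszulCohomology_nil M hk
    exact inDimensionLT_of_finite

variable [IsNoetherianRing R]

lemma isCofiniteModDim_koszulCohomology_of_suffix (haM : support R M ⊆ PrimeSpectrum.zeroLocus a)
    (hla : ∀ x ∈ l, x ∈ a) (hdim : ∀ m, m <:+ l → InDimensionLT R (e + 1) (koszulCohomology m M k))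
    (hl : IsCofiniteModDim a e (koszulCohomology l M k)) :
    ∀ m, m <:+ l → IsCofiniteModDim a e (koszulCohomology m M k) := by
  induction l with
  | nil =>
    intro m hm
    rwa [List.suffix_nil.1 hm]
  | cons x l ih =>
    intro m hm
    obtain rfl | hm := List.suffix_cons_iff.1 hm
    · exact hl
    obtain ⟨f, hf⟩ := exists_exact_koszulCohomology_lsmul l M k x
    exact ih (fun y hy => hla y (List.mem_cons_of_mem x hy))
      (fun m hm => hdim m (hm.trans (List.suffix_cons x l)))
      (hl.of_exact_lsmul (hla x List.mem_cons_self) hf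
        ((support_koszulCohomology_subset l M k).trans haM) (hdim l (List.suffix_cons x l))) m hm

lemma isCofiniteModDim_koszulCohomology_succ
    (h : ∀ m, m <:+ l → IsCofiniteModDim a e (koszulCohomology m M k)) :
    IsCofiniteModDim a e (koszulCohomology l M (k + 1)) := by
  induction l with
  | nil =>
    have := subsingleton_koszulCohomology_nil M k.succ_ne_zero
    exact .of_subsingleton
  | cons x l ih =>
    obtain ⟨f, g, hfg⟩ := exists_exact_koszulCohomology_succ l M k x
    exact ((h l (List.suffix_cons x l)).of_surjective (Submodule.mkQ_surjective _)).of_exact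
      (ih fun m hm => h m (hm.trans (List.suffix_cons x l))) hfg

lemma isCofiniteModDim_koszulCohomology_of_le
    (h : ∀ m, m <:+ l → IsCofiniteModDim a e (koszulCohomology m M k)) {i : ℕ} (hki : k ≤ i) :
    ∀ m, m <:+ l → IsCofiniteModDim a e (koszulCohomology m M i) := by
  induction i, hki using Nat.le_induction with
  | base => exact h
  | succ i _ ih =>
    exact fun m hm => isCofiniteModDim_koszulCohomology_succ fun n hn => ih n (hn.trans hm)

namespace HasSmallKoszulCohomology

lemma isCofiniteModDim (hl : HasSmallKoszulCohomology M d j l) (hjd : j ≤ d)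
    (haM : support R M ⊆ PrimeSpectrum.zeroLocus a) (hla : Ideal.ofList l ≤ a)
    (hfin : ∀ i ≤ d, Module.Finite R (koszulCohomology l M i)) (hkj : k ≤ j) :
    ∀ m, m <:+ l → IsCofiniteModDim a (d - k) (koszulCohomology m M k) := by
  have := hfin k (hkj.trans hjd)
  refine isCofiniteModDim_koszulCohomology_of_suffix haM
    (fun x hx => hla (Ideal.subset_span hx)) (fun m hm => ?_)
    (.of_finite ((support_koszulCohomology_subset l M k).trans haM) _)
  rw [← Nat.sub_add_comm (hkj.trans hjd)]
  exact hl m hm k hkj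

lemma exists_cons (hl : HasSmallKoszulCohomology M d (j + 1) l)
    (hdim : Order.krullDim (support R M) ≤ d) (hla : ¬ a ≤ Ideal.ofList l)
    (hcof : ∀ k ≤ j, IsCofiniteModDim a (d - k) (koszulCohomology l M k)) :
    ∃ x ∈ a, x ∉ Ideal.ofList l ∧ HasSmallKoszulCohomology M d (j + 1) (x :: l) := by
  choose! W hW haW hWe using fun k hk => (hcof k hk).exists_forall_inDimensionLT_quotSMulTop
  obtain ⟨x, hxa, hx⟩ := exists_mem_forall_notMem_of_finite (a := a) (b := Ideal.ofList l)
    (s := insert (Ideal.ofList l) (⋃ k ∈ Set.Iic j, PrimeSpectrum.asIdeal '' W k))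
    (((Set.finite_Iic j).biUnion fun k hk => (hW k hk).image _).insert _)
    (by
      rintro I (rfl | hI) hIl
      · exact absurd rfl hIl
      · obtain ⟨k, _, p, _, rfl⟩ := Set.mem_iUnion₂.1 hI
        exact p.isPrime)
    (by
      rintro I (rfl | hI)
      · exact hla
      · obtain ⟨k, hk, p, hp, rfl⟩ := Set.mem_iUnion₂.1 hI
        exact haW k hk p hp)
  refine ⟨x, hxa, hx _ (Set.mem_insert _ _), fun m hm k hk => ?_⟩
  obtain rfl | hm := List.suffix_cons_iff.1 hm
  · obtain _ | k := k
    · exact zero hdim (x :: l) _ List.suffix_rfl 0 le_rfl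
    · have hkj : k ≤ j := by lia
      obtain ⟨f, g, h⟩ := exists_exact_koszulCohomology_succ l M k x
      have hxk := hWe k hkj x fun p hp => hx _ (Set.mem_insert_of_mem _
        (Set.mem_biUnion (Set.mem_Iic.2 hkj) ⟨p, hp, rfl⟩))
      rw [← Nat.add_sub_add_right d 1 k] at hxk
      exact hxk.of_exact (hl l List.suffix_rfl (k + 1) hk) h
  · exact hl m hm k hk

lemma exists_suffix (hl : HasSmallKoszulCohomology M d j l) (hjd : j ≤ d)
    (haM : support R M ⊆ PrimeSpectrum.zeroLocus a) (hdim : Order.krullDim (support R M) ≤ d)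
    (hfin : ∀ m, Ideal.ofList m = a → ∀ i ≤ d, Module.Finite R (koszulCohomology m M i))
    (hla : Ideal.ofList l ≤ a) :
    ∃ m, l <:+ m ∧ Ideal.ofList m = a ∧ HasSmallKoszulCohomology M d j m := by
  induction j generalizing l with
  | zero =>
    obtain ⟨s, rfl⟩ := IsNoetherian.noetherian a
    refine ⟨s.toList ++ l, List.suffix_append _ _, ?_, zero hdim _⟩
    rw [Ideal.ofList_append, sup_eq_left.2]
    · simp [Ideal.ofList]
    · simpa [Ideal.ofList] using hla
  | succ j ih =>
    induction hI : Ideal.ofList l using WellFoundedGT.induction generalizing l with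
    | _ I ihI =>
    subst hI
    by_cases hal : a ≤ Ideal.ofList l
    · exact ⟨l, List.suffix_rfl, hla.antisymm hal, hl⟩
    obtain ⟨m, hlm, hma, hm⟩ := ih (fun m hm k hk => hl m hm k (hk.trans j.le_succ))
      (j.le_succ.trans hjd) hla
    obtain ⟨x, hxa, hxl, hx⟩ := hl.exists_cons hdim hal fun k hk =>
      hm.isCofiniteModDim (j.le_succ.trans hjd) haM hma.le (hfin m hma) hk l hlm
    have hlt : Ideal.ofList l < Ideal.ofList (x :: l) := by
      rw [Ideal.ofList_cons]
      exact right_lt_sup.2 fun h => hxl (h (Ideal.mem_span_singleton_self x))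
    obtain ⟨n, hn, hna, hnj⟩ := ihI _ hlt hx (by
      rw [Ideal.ofList_cons, sup_le_iff, Ideal.span_singleton_le_iff_mem]
      exact ⟨hxa, hla⟩) rfl
    exact ⟨n, (List.suffix_cons x l).trans hn, hna, hnj⟩

end HasSmallKoszulCohomology

lemma exists_ofList_eq_forall_finite_koszulCohomology
    (haM : support R M ⊆ PrimeSpectrum.zeroLocus a) (hdim : Order.krullDim (support R M) ≤ d)
    (hfin : ∀ m, Ideal.ofList m = a → ∀ i ≤ d, Module.Finite R (koszulCohomology m M i)) :
    ∃ l, Ideal.ofList l = a ∧ ∀ i, Module.Finite R (koszulCohomology l M i) := by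
  obtain ⟨l, -, hla, hl⟩ := (HasSmallKoszulCohomology.nil hdim d).exists_suffix le_rfl haM hdim hfin
    (by simp)
  refine ⟨l, hla, fun i => ?_⟩
  obtain hi | hi := le_total i d
  · exact hfin l hla i hi
  have hcof := isCofiniteModDim_koszulCohomology_of_le
    (hl.isCofiniteModDim le_rfl haM hla.le (hfin l hla) le_rfl) hi l List.suffix_rfl
  have hsocle := hcof.inDimensionLT_torsionBySet
  rw [Nat.sub_self, inDimensionLT_zero_iff] at hsocle
  exact finite_of_finite_torsionBySet (hla ▸ ofList_le_radical_annihilator_koszulCohomology l M i)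

end SmallKoszulCohomology

theorem stmt0_general {R : Type u} [CommRing R] [IsNoetherianRing R] (a : Ideal R)
    (M : ModuleCat.{u} R) (d : ℕ) (htor : ∀ m : M, ∃ n : ℕ, ∀ r ∈ a ^ n, r • m = 0)
    (hdim : Order.krullDim (Module.support R M) ≤ d) :
    IsCofinite a M ↔ ∀ i ≤ d, Module.Finite R (extQuot a i M) := by
  have := HasDerivedCategory.standard (ModuleCat.{u} R)
  refine ⟨fun h i _ => h.2 i, fun h => ?_⟩
  have haM := support_subset_zeroLocus_of_forall_exists_pow htor
  obtain ⟨l, rfl, hl⟩ := exists_ofList_eq_forall_finite_koszulCohomology haM hdim fun m hm =>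
    (finite_extQuot_iff_finite_koszulCohomology m M d).1 (hm ▸ h)
  exact ⟨haM, fun i =>
    (finite_extQuot_iff_finite_koszulCohomology l M i).2 (fun j _ => hl j) i le_rfl⟩

theorem stmt0 {R : Type u} [CommRing R] [IsNoetherianRing R] (a : Ideal R)
    (M : ModuleCat.{u} R)
    (htor : ∀ m : M, ∃ n : ℕ, ∀ r ∈ a ^ n, r • m = 0)
    (hdim : Order.krullDim (Module.support R M) ≤ 2) :
    IsCofinite a M ↔
      (Module.Finite R (extQuot a 0 M) ∧ Module.Finite R (extQuot a 1 M) ∧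
        Module.Finite R (extQuot a 2 M)) := by
  rw [stmt0_general a M 2 htor hdim]
  exact ⟨fun h => ⟨h 0 (by simp), h 1 (by simp), h 2 le_rfl⟩,
    fun ⟨h₀, h₁, h₂⟩ i _ => by interval_cases i <;> assumption⟩
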